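/- arXiv:1504.05732 — 2 statements merged into one kernel-verified Lean document; each statement's English description precedes it below -/
import Mathlib

section
/- Let (X, F, μ, T) be a measure-preserving system on a probability space and f ∈ L¹(μ). Then there exists a set X_f ⊆ X of full measure such that for every x ∈ X_f and every t ∈ [0,1), the averages (1/N) ∑_{n=1}^{N} f(Tⁿx) e^{2πint} converge as N → ∞. -/
open MeasureTheory Filter Finset

namespace WW

open Topology

/-- Cesaro averages. -/
noncomputable def cav {E : Type*} [NormedAddCommGroup E] [NormedSpace ℝ E] (u : ℕ → E) (N : ℕ) : E :=
  (N : ℝ)⁻¹ • ∑ n ∈ range N, u n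

lemma cav_norm_le {E : Type*} [NormedAddCommGroup E] [NormedSpace ℝ E] (u : ℕ → E) (C : ℝ)
    (hC : 0 ≤ C) (h : ∀ n, ‖u n‖ ≤ C) (N : ℕ) : ‖cav u N‖ ≤ C := by
  unfold cav
  rw [norm_smul]
  have h1 : ‖∑ n ∈ range N, u n‖ ≤ N * C := by
    refine (norm_sum_le _ _).trans ?_
    refine (Finset.sum_le_sum fun n _ => h n).trans ?_
    simp
  rcases Nat.eq_zero_or_pos N with rfl | hN
  · simpa using hC
  · have : (0:ℝ) < N := by exact_mod_cast hN
    rw [norm_inv, Real.norm_of_nonneg this.le, inv_mul_le_iff₀ this]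
    exact h1

lemma cav_shift_one {E : Type*} [NormedAddCommGroup E] [NormedSpace ℝ E] (u : ℕ → E) (C : ℝ)
    (h : ∀ n, ‖u n‖ ≤ C) :
    Tendsto (fun N => cav (fun n => u (n + 1)) N - cav u N) atTop (𝓝 0) := by
  have h2 : Tendsto (fun N : ℕ => (N : ℝ)⁻¹ * (C + C)) atTop (𝓝 0) := by
    simpa using (tendsto_inv_atTop_nhds_zero_nat (𝕜 := ℝ)).mul_const (C + C)
  refine squeeze_zero_norm (fun N => ?_) h2
  unfold cav
  rw [← smul_sub, ← Finset.sum_sub_distrib, Finset.sum_range_sub, norm_smul, norm_inv,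
    Real.norm_of_nonneg (Nat.cast_nonneg N)]
  gcongr
  exact (norm_sub_le _ _).trans (add_le_add (h _) (h _))

lemma cav_shift {E : Type*} [NormedAddCommGroup E] [NormedSpace ℝ E] (u : ℕ → E) (C : ℝ)
    (h : ∀ n, ‖u n‖ ≤ C) (k : ℕ) :
    Tendsto (fun N => cav (fun n => u (n + k)) N - cav u N) atTop (𝓝 0) := by
  induction k with
  | zero => simp
  | succ k ih =>
    have := (cav_shift_one (fun n => u (n + k)) C (fun n => h _)).add ih
    simp only [add_zero, sub_add_sub_cancel] at this
    refine this.congr fun N => ?_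
    congr 2
    funext n
    congr 1
    ring

lemma limsup_le_of_sub {u v : ℕ → ℝ} {C : ℝ} (hu : ∀ n, |u n| ≤ C) (hv : ∀ n, |v n| ≤ C)
    (h : Tendsto (fun n => u n - v n) atTop (𝓝 0)) : limsup u atTop ≤ limsup v atTop := by
  refine le_of_forall_pos_le_add fun ε hε => ?_
  have hvb : IsBoundedUnder (· ≤ ·) atTop v :=
    isBoundedUnder_of ⟨C, fun n => (abs_le.1 (hv n)).2⟩
  have huc : IsCoboundedUnder (· ≤ ·) atTop u :=
    (isBoundedUnder_of ⟨-C, fun n => (abs_le.1 (hu n)).1⟩ : IsBoundedUnder (· ≥ ·) atTop u).isCoboundedUnder_le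
  refine limsup_le_of_le huc ?_
  have h1 : ∀ᶠ n in atTop, v n < limsup v atTop + ε / 2 :=
    eventually_lt_of_limsup_lt (by linarith) hvb
  have h2 : ∀ᶠ n in atTop, u n - v n < ε / 2 := h.eventually_lt_const (by linarith)
  filter_upwards [h1, h2] with n h1 h2
  linarith

lemma limsup_eq_of_sub {u v : ℕ → ℝ} {C : ℝ} (hu : ∀ n, |u n| ≤ C) (hv : ∀ n, |v n| ≤ C)
    (h : Tendsto (fun n => u n - v n) atTop (𝓝 0)) : limsup u atTop = limsup v atTop := by
  refine le_antisymm (limsup_le_of_sub hu hv h) (limsup_le_of_sub hv hu ?_)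
  simpa using h.neg

/-! ### Maximal ergodic theorem and Birkhoff's theorem for bounded functions -/

section ergodic

variable {X : Type*} [MeasurableSpace X]

/-- Running maxima of ergodic sums. -/
noncomputable def rmax (T : X → X) (f : X → ℝ) : ℕ → X → ℝ
  | 0 => fun _ => 0
  | n + 1 => fun x => max 0 (f x + rmax T f n (T x))

lemma rmax_nonneg (T : X → X) (f : X → ℝ) (n : ℕ) (x : X) : 0 ≤ rmax T f n x := by
  cases n <;> simp [rmax]

lemma rmax_mono (T : X → X) (f : X → ℝ) (n : ℕ) : ∀ x, rmax T f n x ≤ rmax T f (n + 1) x := by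
  induction n with
  | zero => intro x; simp [rmax]
  | succ n ih =>
    intro x
    have := ih (T x)
    simp only [rmax] at this ⊢
    gcongr

lemma rmax_meas {T : X → X} (hT : Measurable T) {f : X → ℝ} (hf : Measurable f) (n : ℕ) :
    Measurable (rmax T f n) := by
  induction n with
  | zero => exact measurable_const
  | succ n ih => exact measurable_const.max (hf.add (ih.comp hT))

lemma rmax_int {μ : Measure X} [IsFiniteMeasure μ] {T : X → X} (hT : MeasurePreserving T μ μ)
    {f : X → ℝ} (hf : Integrable f μ) (n : ℕ) :
    Integrable (rmax T f n) μ := by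
  induction n with
  | zero => exact integrable_const _
  | succ n ih => exact (integrable_const (0:ℝ)).sup (hf.add (hT.integrable_comp_of_integrable ih))

lemma sum_le_rmax (T : X → X) (f : X → ℝ) (n : ℕ) :
    ∀ x, ∑ k ∈ range n, f (T^[k] x) ≤ rmax T f n x := by
  induction n with
  | zero => intro x; simp [rmax]
  | succ n ih =>
    intro x
    rw [Finset.sum_range_succ']
    have := ih (T x)
    simp only [rmax, Function.iterate_succ_apply, Function.iterate_zero, id_eq]
    exact le_max_of_le_right (by linarith)

/-- Maximal ergodic lemma (Garsia). -/
lemma maximal_step {μ : Measure X} [IsFiniteMeasure μ] {T : X → X} (hT : MeasurePreserving T μ μ)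
    {f : X → ℝ} (hfm : Measurable f) (hf : Integrable f μ) (n : ℕ) :
    0 ≤ ∫ x in {x | 0 < rmax T f n x}, f x ∂μ := by
  cases n with
  | zero => simp [rmax]
  | succ n =>
    set M := rmax T f (n + 1) with hM
    have hMi : Integrable M μ := rmax_int hT hf _
    have hMm : Measurable M := rmax_meas hT.measurable hfm _
    set E : Set X := {x | 0 < M x}
    have hE : MeasurableSet E := measurableSet_lt measurable_const hMm
    have hMT : Integrable (fun x => M (T x)) μ := hT.integrable_comp_of_integrable hMi
    have h1 : ∫ x in E, (M x - M (T x)) ∂μ ≤ ∫ x in E, f x ∂μ := by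
      refine setIntegral_mono_on (hMi.sub hMT).integrableOn hf.integrableOn hE fun x hx => ?_
      have hx' : 0 < max 0 (f x + rmax T f n (T x)) := hx
      have h2 : M x = f x + rmax T f n (T x) := by
        have : M x = max 0 (f x + rmax T f n (T x)) := rfl
        rw [this]
        exact max_eq_right (by
          rcases lt_max_iff.1 hx' with h | h
          · exact absurd h (lt_irrefl _)
          · exact h.le)
      have := rmax_mono T f n (T x)
      rw [h2]; linarith
    have h3 : ∫ x in E, M x ∂μ = ∫ x, M x ∂μ := by
      refine setIntegral_eq_integral_of_forall_compl_eq_zero fun x hx => ?_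
      exact le_antisymm (not_lt.1 hx) (rmax_nonneg T f _ x)
    have h4 : ∫ x in E, M (T x) ∂μ ≤ ∫ x, M (T x) ∂μ :=
      setIntegral_le_integral hMT (Eventually.of_forall fun x => rmax_nonneg T f _ _)
    have h5 : ∫ x, M (T x) ∂μ = ∫ x, M x ∂μ := by
      have := integral_map (μ := μ) hT.measurable.aemeasurable (f := M) (by
        exact hMm.aestronglyMeasurable)
      rw [hT.map_eq] at this
      exact this.symm
    rw [integral_sub hMi.integrableOn hMT.integrableOn] at h1
    linarith

/-- Maximal ergodic theorem, in the form needed: there is a measurable set containing every point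
with a positive ergodic sum on which the integral is nonnegative. -/
lemma maximal_ergodic {μ : Measure X} [IsFiniteMeasure μ] {T : X → X}
    (hT : MeasurePreserving T μ μ)
    {f : X → ℝ} (hfm : Measurable f) (hf : Integrable f μ) :
    ∃ E : Set X, MeasurableSet E ∧ (∀ x, ∀ n, 0 < ∑ k ∈ range n, f (T^[k] x) → x ∈ E) ∧
      0 ≤ ∫ x in E, f x ∂μ := by
  refine ⟨⋃ n, {x | 0 < rmax T f n x}, ?_, ?_, ?_⟩
  · exact MeasurableSet.iUnion fun n =>
      measurableSet_lt measurable_const (rmax_meas hT.measurable hfm _)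
  · intro x n h
    exact Set.mem_iUnion.2 ⟨n, h.trans_le (sum_le_rmax T f n x)⟩
  · have := tendsto_setIntegral_of_monotone (μ := μ) (f := f)
      (s := fun n => {x | 0 < rmax T f n x})
      (fun n => measurableSet_lt measurable_const (rmax_meas hT.measurable hfm _))
      (monotone_nat_of_le_succ fun n x hx => lt_of_lt_of_le hx (rmax_mono T f n x))
      hf.integrableOn
    exact ge_of_tendsto' this fun n => maximal_step hT hfm hf n

/-- Weak type maximal inequality. -/
lemma weak_type {μ : Measure X} [IsFiniteMeasure μ] {T : X → X}
    (hT : MeasurePreserving T μ μ)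
    {f : X → ℝ} (hfm : Measurable f) (hf : Integrable f μ) (h0 : ∀ x, 0 ≤ f x) (c : ℝ) :
    ∃ E : Set X, MeasurableSet E ∧
      (∀ x, x ∉ E → ∀ n, ‖cav (fun k => f (T^[k] x)) n‖ ≤ max c 0) ∧
      c * μ.real E ≤ ∫ x, f x ∂μ := by
  obtain ⟨E, hE, h1, h2⟩ := maximal_ergodic hT (f := fun x => f x - c) (hfm.sub measurable_const)
    (hf.sub (integrable_const c))
  refine ⟨E, hE, ?_, ?_⟩
  · intro x hx n
    have h3 : ¬ _ := fun h => hx (h1 x n h)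
    rw [not_lt, Finset.sum_sub_distrib, sub_nonpos] at h3
    simp only [sum_const, card_range, nsmul_eq_mul] at h3
    unfold cav
    rw [Real.norm_of_nonneg (smul_nonneg (by positivity) (Finset.sum_nonneg fun k _ => h0 _))]
    rcases Nat.eq_zero_or_pos n with rfl | hn
    · simp
    · refine le_max_of_le_left ?_
      rw [smul_eq_mul, inv_mul_le_iff₀ (by exact_mod_cast hn)]
      exact h3
  · rw [integral_sub hf.integrableOn (integrable_const c), setIntegral_const, smul_eq_mul] at h2
    have := setIntegral_le_integral (s := E) hf (Eventually.of_forall h0)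
    linarith

/-- One-sided consequence of the maximal theorem on an invariant set. -/
lemma invariant_bound {μ : Measure X} [IsFiniteMeasure μ] {T : X → X}
    (hT : MeasurePreserving T μ μ)
    {f : X → ℝ} (hfm : Measurable f) (hf : Integrable f μ) {D : Set X} (hD : MeasurableSet D)
    (hDT : T ⁻¹' D = D) (b : ℝ) (hb : ∀ x ∈ D, ∃ n, b < cav (fun k => f (T^[k] x)) n ∧ 0 < n) :
    b * μ.real D ≤ ∫ x in D, f x ∂μ := by
  have hT' : MeasurePreserving T (μ.restrict D) (μ.restrict D) := by
    have := hT.restrict_preimage hD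
    rwa [hDT] at this
  obtain ⟨E, hE, h1, h2⟩ := maximal_ergodic hT' (f := fun x => f x - b) (hfm.sub measurable_const)
    (hf.integrableOn.sub (integrable_const b))
  have hsub : D ⊆ E := by
    intro x hx
    obtain ⟨n, hn, hn0⟩ := hb x hx
    refine h1 x n ?_
    have hn0' : (0:ℝ) < n := by exact_mod_cast hn0
    unfold cav at hn
    rw [smul_eq_mul, lt_inv_mul_iff₀ hn0'] at hn
    rw [Finset.sum_sub_distrib]
    simpa using hn
  rw [Measure.restrict_restrict hE, Set.inter_eq_right.2 hsub,
    integral_sub hf.integrableOn (integrable_const b), setIntegral_const, smul_eq_mul] at h2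
  linarith

lemma cav_neg (u : ℕ → ℝ) (N : ℕ) : cav (fun n => - u n) N = - cav u N := by
  simp [cav]

lemma birkhoff_real {μ : Measure X} [IsFiniteMeasure μ] {T : X → X}
    (hT : MeasurePreserving T μ μ)
    {f : X → ℝ} (hfm : Measurable f) (C : ℝ) (hC : ∀ x, |f x| ≤ C) :
    ∀ᵐ x ∂μ, ∃ L : ℝ, Tendsto (cav (fun n => f (T^[n] x))) atTop (𝓝 L) := by
  have hf : Integrable f μ := Integrable.of_bound hfm.aestronglyMeasurable C (Eventually.of_forall hC)
  set A : X → ℕ → ℝ := fun x => cav (fun n => f (T^[n] x)) with hA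
  have hAb : ∀ x n, |A x n| ≤ C := fun x n => by
    rw [← Real.norm_eq_abs]
    exact cav_norm_le _ C ((abs_nonneg _).trans (hC x)) (fun n => hC _) n
  have hAm : ∀ n, Measurable fun x => A x n := by
    intro n
    simp only [hA, cav, smul_eq_mul]
    refine Measurable.const_mul ?_ _
    exact Finset.measurable_sum _ fun k _ => hfm.comp (hT.measurable.iterate k)
  have hAT : ∀ x, Tendsto (fun n => A (T x) n - A x n) atTop (𝓝 0) := fun x => by
    simpa [hA, Function.iterate_succ_apply] using cav_shift_one (fun n => f (T^[n] x)) C (fun n => hC _)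
  set U : X → ℝ := fun x => limsup (A x) atTop with hU
  set V : X → ℝ := fun x => limsup (fun n => - A x n) atTop with hV
  have hUm : Measurable U := Measurable.limsup hAm
  have hVm : Measurable V := Measurable.limsup fun n => (hAm n).neg
  have hUT : ∀ x, U (T x) = U x := fun x =>
    limsup_eq_of_sub (hAb _) (hAb _) (hAT x)
  have hVT : ∀ x, V (T x) = V x := fun x => by
    refine limsup_eq_of_sub (C := C) (fun n => by rw [abs_neg]; exact hAb _ _)
      (fun n => by rw [abs_neg]; exact hAb _ _) ?_
    have := (hAT x).neg
    rw [neg_zero] at this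
    refine this.congr fun n => by ring
  have hb1 : ∀ x, IsBoundedUnder (· ≤ ·) atTop (A x) := fun x =>
    isBoundedUnder_of ⟨C, fun n => (abs_le.1 (hAb x n)).2⟩
  have hb2 : ∀ x, IsBoundedUnder (· ≥ ·) atTop (A x) := fun x =>
    isBoundedUnder_of ⟨-C, fun n => (abs_le.1 (hAb x n)).1⟩
  have hb3 : ∀ x, IsBoundedUnder (· ≤ ·) atTop (fun n => - A x n) := fun x =>
    isBoundedUnder_of ⟨C, fun n => by linarith [(abs_le.1 (hAb x n)).1]⟩
  have hb4 : ∀ x, IsBoundedUnder (· ≥ ·) atTop (fun n => - A x n) := fun x =>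
    isBoundedUnder_of ⟨-C, fun n => by
      have := (abs_le.1 (hAb x n)).2
      show -A x n ≥ -C
      linarith⟩
  have key : ∀ a b : ℚ, a < b → ∀ᵐ x ∂μ, ¬ (-(a:ℝ) < V x ∧ (b:ℝ) < U x) := by
    intro a b hab
    set D : Set X := {x | -(a:ℝ) < V x ∧ (b:ℝ) < U x} with hD
    have hDm : MeasurableSet D :=
      (measurableSet_lt measurable_const hVm).inter (measurableSet_lt measurable_const hUm)
    have hDT : T ⁻¹' D = D := by
      ext x
      simp only [hD, Set.mem_preimage, Set.mem_ofPred_eq, hUT, hVT]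
    have h1 := invariant_bound hT hfm hf hDm hDT b (fun x hx => by
      have : ∃ᶠ n in atTop, (b:ℝ) < A x n := frequently_lt_of_lt_limsup (hb2 x).isCoboundedUnder_le hx.2
      obtain ⟨n, h1, h2⟩ := (this.and_eventually (eventually_gt_atTop 0)).exists
      exact ⟨n, h1, h2⟩)
    have h2 := invariant_bound hT hfm.neg hf.neg hDm hDT (-a) (fun x hx => by
      have : ∃ᶠ n in atTop, -(a:ℝ) < - A x n := frequently_lt_of_lt_limsup (hb4 x).isCoboundedUnder_le hx.1
      obtain ⟨n, h1, h2⟩ := (this.and_eventually (eventually_gt_atTop 0)).exists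
      refine ⟨n, ?_, h2⟩
      simp only [Pi.neg_apply]
      rw [cav_neg]
      exact h1)
    simp only [Pi.neg_apply] at h2
    rw [integral_neg] at h2
    have hab' : (a:ℝ) < b := by exact_mod_cast hab
    have h3 : μ.real D = 0 := by
      have := measureReal_nonneg (μ := μ) (s := D)
      nlinarith
    rw [ae_iff]
    simp only [not_not]
    exact (measureReal_eq_zero_iff).1 h3
  have key2 : ∀ᵐ x ∂μ, ∀ a b : ℚ, a < b → ¬ (-(a:ℝ) < V x ∧ (b:ℝ) < U x) := by
    rw [ae_all_iff]; intro a
    rw [ae_all_iff]; intro b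
    by_cases hab : a < b
    · filter_upwards [key a b hab] with x hx _ using hx
    · exact Eventually.of_forall fun x h => absurd h hab
  filter_upwards [key2] with x hx
  refine tendsto_of_no_upcrossings (s := Set.range ((↑) : ℚ → ℝ)) Rat.denseRange_cast ?_ (hb1 x) (hb2 x)
  rintro _ ⟨a, rfl⟩ _ ⟨b, rfl⟩ hab ⟨h1, h2⟩
  have hab' : a < b := by exact_mod_cast hab
  obtain ⟨a', ha1, ha2⟩ := exists_rat_btwn hab
  have ha2' : (a' : ℝ) < b := ha2
  obtain ⟨b', hb1', hb2'⟩ := exists_rat_btwn ha2'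
  refine hx a' b' (by exact_mod_cast hb1') ⟨?_, ?_⟩
  · have : -(a:ℝ) ≤ V x := le_limsup_of_frequently_le (h1.mono fun n hn => by linarith) (hb3 x)
    linarith
  · have : (b:ℝ) ≤ U x := le_limsup_of_frequently_le (h2.mono fun n hn => hn.le) (hb1 x)
    linarith

lemma birkhoff_complex {μ : Measure X} [IsFiniteMeasure μ] {T : X → X}
    (hT : MeasurePreserving T μ μ)
    {f : X → ℂ} (hfm : Measurable f) (C : ℝ) (hC : ∀ x, ‖f x‖ ≤ C) :
    ∀ᵐ x ∂μ, ∃ L : ℂ, Tendsto (cav (fun n => f (T^[n] x))) atTop (𝓝 L) := by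
  filter_upwards [birkhoff_real hT (Complex.measurable_re.comp hfm) C
      (fun x => (Complex.abs_re_le_norm _).trans (hC x)),
    birkhoff_real hT (Complex.measurable_im.comp hfm) C
      (fun x => (Complex.abs_im_le_norm _).trans (hC x))] with x h1 h2
  obtain ⟨L1, h1⟩ := h1
  obtain ⟨L2, h2⟩ := h2
  refine ⟨(L1 : ℂ) + L2 * Complex.I, ?_⟩
  have := ((Complex.continuous_ofReal.tendsto L1).comp h1).add
    (((Complex.continuous_ofReal.tendsto L2).comp h2).mul_const Complex.I)
  refine this.congr fun N => ?_
  apply Complex.ext <;> simp [cav]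

end ergodic

/-! ### Deterministic lemmas on bounded sequences -/

lemma cav_mul_left (c : ℂ) (u : ℕ → ℂ) (N : ℕ) : cav (fun n => c * u n) N = c * cav u N := by
  simp only [cav, ← Finset.mul_sum, mul_smul_comm]

lemma cav_finset_sum {ι : Type*} (s : Finset ι) (u : ι → ℕ → ℂ) (N : ℕ) :
    cav (fun n => ∑ i ∈ s, u i n) N = ∑ i ∈ s, cav (u i) N := by
  simp only [cav]
  rw [Finset.sum_comm, Finset.smul_sum]

lemma cav_ofReal (u : ℕ → ℝ) (N : ℕ) : ((cav u N : ℝ) : ℂ) = cav (fun n => (u n : ℂ)) N := by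
  simp [cav]

lemma cav_finset_sum_real {ι : Type*} (s : Finset ι) (u : ι → ℕ → ℝ) (N : ℕ) :
    cav (fun n => ∑ i ∈ s, u i n) N = ∑ i ∈ s, cav (u i) N := by
  simp only [cav]
  rw [Finset.sum_comm, Finset.smul_sum]

lemma norm_cav_le (u : ℕ → ℂ) (N : ℕ) : ‖cav u N‖ ≤ cav (fun n => ‖u n‖) N := by
  simp only [cav]
  rw [norm_smul, norm_inv, Real.norm_of_nonneg (Nat.cast_nonneg N), smul_eq_mul]
  gcongr
  exact norm_sum_le _ _

lemma cav_mono {u v : ℕ → ℝ} (h : ∀ n, u n ≤ v n) (N : ℕ) : cav u N ≤ cav v N := by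
  simp only [cav, smul_eq_mul]
  gcongr
  exact h _

lemma cav_sq_le (u : ℕ → ℝ) (N : ℕ) : (cav u N) ^ 2 ≤ cav (fun n => u n ^ 2) N := by
  simp only [cav, smul_eq_mul]
  rcases Nat.eq_zero_or_pos N with rfl | hN
  · simp
  have hN' : (0:ℝ) < N := by exact_mod_cast hN
  have := sq_sum_le_card_mul_sum_sq (s := range N) (f := u)
  rw [card_range] at this
  rw [mul_pow, inv_pow, inv_mul_le_iff₀ (by positivity)]
  calc _ ≤ _ := this
    _ = _ := by field_simp

lemma cav_le_of_le {u : ℕ → ℝ} {C : ℝ} (hC : 0 ≤ C) (h : ∀ n, u n ≤ C) (N : ℕ) : cav u N ≤ C := by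
  refine (cav_mono h N).trans ?_
  simp only [cav, sum_const, card_range, smul_eq_mul, nsmul_eq_mul]
  rcases Nat.eq_zero_or_pos N with rfl | hN
  · simpa using hC
  · have hN' : (0:ℝ) < N := by exact_mod_cast hN
    rw [inv_mul_cancel_left₀ hN'.ne']

/-- The character `e(t) = exp(2πit)`. -/
noncomputable def ee (t : ℝ) : ℂ := Complex.exp (2 * Real.pi * Complex.I * t)

lemma ee_add (s t : ℝ) : ee (s + t) = ee s * ee t := by
  simp only [ee, ← Complex.exp_add]
  congr 1
  push_cast
  ring

lemma ee_norm (t : ℝ) : ‖ee t‖ = 1 := by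
  have : (2 * Real.pi * Complex.I * t : ℂ) = ((2 * Real.pi * t : ℝ) : ℂ) * Complex.I := by
    push_cast; ring
  rw [ee, this, Complex.norm_exp_ofReal_mul_I]

lemma ee_conj (t : ℝ) : (starRingEnd ℂ) (ee t) = ee (-t) := by
  rw [ee, ee, ← Complex.exp_conj]
  congr 1
  simp [map_ofNat]

lemma ee_cont : Continuous ee := by
  unfold ee
  fun_prop

lemma ee_nat_mul (n : ℕ) (t : ℝ) : ee (n * t) = ee t ^ n := by
  rw [ee, ee, ← Complex.exp_nat_mul]
  congr 1
  push_cast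
  ring

lemma ee_zero : ee 0 = 1 := by simp [ee]

lemma ee_ne_one {t : ℝ} (h0 : t ≠ 0) (h : |t| < 1) : ee t ≠ 1 := by
  intro h1
  rw [ee, Complex.exp_eq_one_iff] at h1
  obtain ⟨n, hn⟩ := h1
  have h2 : (t : ℂ) = n := by
    have : (2 * Real.pi * Complex.I : ℂ) ≠ 0 := Complex.two_pi_I_ne_zero
    apply mul_left_cancel₀ this
    rw [hn]; ring
  have h3 : t = n := by exact_mod_cast h2
  rw [h3] at h h0
  have h4 : |n| < 1 := by exact_mod_cast h
  have h5 : n = 0 := Int.abs_lt_one_iff.1 h4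
  simp [h5] at h0

/-- Local twisted averages. -/
noncomputable def bb (a : ℕ → ℂ) (H : ℕ) (t : ℝ) (n : ℕ) : ℂ :=
  cav (fun h => a (n + h) * ee (h * t)) H

/-- Asymptotic mean square of the local twisted averages. -/
noncomputable def mm (a : ℕ → ℂ) (H : ℕ) (t : ℝ) : ℝ :=
  limsup (cav (fun n => ‖bb a H t n‖ ^ 2)) atTop

lemma bb_norm_le {a : ℕ → ℂ} {C : ℝ} (ha : ∀ n, ‖a n‖ ≤ C) (H : ℕ) (t : ℝ) (n : ℕ) :
    ‖bb a H t n‖ ≤ C := by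
  refine cav_norm_le _ C ((norm_nonneg _).trans (ha 0)) (fun h => ?_) H
  rw [norm_mul, ee_norm, mul_one]
  exact ha _

lemma bbsq_le {a : ℕ → ℂ} {C : ℝ} (ha : ∀ n, ‖a n‖ ≤ C) (H : ℕ) (t : ℝ) (n : ℕ) :
    ‖bb a H t n‖ ^ 2 ≤ C ^ 2 :=
  pow_le_pow_left₀ (norm_nonneg _) (bb_norm_le ha H t n) 2

lemma mm_shift {a : ℕ → ℂ} {C : ℝ} (ha : ∀ n, ‖a n‖ ≤ C) (H : ℕ) (t : ℝ) :
    mm (fun n => a (n + 1)) H t = mm a H t := by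
  have hb : ∀ a : ℕ → ℂ, (∀ n, ‖a n‖ ≤ C) → ∀ n, ‖(‖bb a H t n‖ ^ 2)‖ ≤ C ^ 2 := by
    intro a ha n
    rw [Real.norm_of_nonneg (by positivity)]
    exact bbsq_le ha H t n
  refine limsup_eq_of_sub (C := C ^ 2) (fun N => ?_) (fun N => ?_) ?_
  · rw [← Real.norm_eq_abs]
    exact cav_norm_le _ _ (by positivity) (hb _ fun n => ha _) N
  · rw [← Real.norm_eq_abs]
    exact cav_norm_le _ _ (by positivity) (hb _ ha) N
  · have := cav_shift_one (fun n => ‖bb a H t n‖ ^ 2) (C ^ 2) (hb a ha)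
    refine this.congr fun N => ?_
    congr 2
    funext n
    simp only [bb]
    congr 3
    funext h
    congr 2
    ring

/-- All autocorrelations of the sequence exist. -/
def Corr (a : ℕ → ℂ) : Prop :=
  ∀ h h' : ℕ, ∃ L : ℂ, Tendsto (cav (fun n => a (n + h) * (starRingEnd ℂ) (a (n + h')))) atTop (𝓝 L)

lemma mm_lim {a : ℕ → ℂ} (hc : Corr a) (H : ℕ) :
    (∀ t, Tendsto (cav (fun n => ‖bb a H t n‖ ^ 2)) atTop (𝓝 (mm a H t))) ∧
      Continuous (mm a H) := by
  choose G hG using hc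
  set Φ : ℝ → ℂ := fun t => ((H : ℝ) : ℂ)⁻¹ * ((H : ℝ) : ℂ)⁻¹ * ∑ h ∈ range H, ∑ h' ∈ range H,
    (ee (h * t) * (starRingEnd ℂ) (ee (h' * t))) * G h h' with hΦ
  have h1 : ∀ t, Tendsto (fun N => ((cav (fun n => ‖bb a H t n‖ ^ 2) N : ℝ) : ℂ)) atTop (𝓝 (Φ t)) := by
    intro t
    have e1 : ∀ n, ((‖bb a H t n‖ ^ 2 : ℝ) : ℂ) = ((H : ℝ) : ℂ)⁻¹ * ((H : ℝ) : ℂ)⁻¹ *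
        ∑ h ∈ range H, ∑ h' ∈ range H, (ee (h * t) * (starRingEnd ℂ) (ee (h' * t))) *
          (a (n + h) * (starRingEnd ℂ) (a (n + h'))) := by
      intro n
      push_cast
      rw [← Complex.mul_conj']
      simp only [bb, cav, Complex.real_smul, map_mul, map_sum, Complex.conj_ofReal]
      rw [mul_mul_mul_comm, Finset.sum_mul_sum]
      push_cast
      congr 1
      refine Finset.sum_congr rfl fun h _ => Finset.sum_congr rfl fun h' _ => ?_
      ring
    have e2 : ∀ N, ((cav (fun n => ‖bb a H t n‖ ^ 2) N : ℝ) : ℂ) = ((H : ℝ) : ℂ)⁻¹ * ((H : ℝ) : ℂ)⁻¹ *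
        ∑ h ∈ range H, ∑ h' ∈ range H, (ee (h * t) * (starRingEnd ℂ) (ee (h' * t))) *
          cav (fun n => a (n + h) * (starRingEnd ℂ) (a (n + h'))) N := by
      intro N
      rw [cav_ofReal]
      simp_rw [e1]
      rw [cav_mul_left, cav_finset_sum]
      congr 1
      refine Finset.sum_congr rfl fun h _ => ?_
      rw [cav_finset_sum]
      refine Finset.sum_congr rfl fun h' _ => ?_
      rw [cav_mul_left]
    simp_rw [e2]
    refine Tendsto.const_mul _ ?_
    refine tendsto_finsetSum _ fun h _ => tendsto_finsetSum _ fun h' _ => ?_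
    exact (hG h h').const_mul _
  have h2 : ∀ t, Tendsto (cav (fun n => ‖bb a H t n‖ ^ 2)) atTop (𝓝 (Φ t).re) := fun t =>
    ((Complex.continuous_re.tendsto _).comp (h1 t))
  have h3 : ∀ t, mm a H t = (Φ t).re := fun t => (h2 t).limsup_eq
  refine ⟨fun t => by rw [h3]; exact h2 t, ?_⟩
  have : mm a H = fun t => (Φ t).re := funext h3
  rw [this]
  have hee := ee_cont
  refine Complex.continuous_re.comp ?_
  refine continuous_const.mul ?_
  refine continuous_finsetSum _ fun h _ => continuous_finsetSum _ fun h' _ => ?_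
  refine Continuous.mul (Continuous.mul (ee_cont.comp (by fun_prop)) ?_) continuous_const
  exact Complex.continuous_conj.comp (ee_cont.comp (by fun_prop))

/-- van der Corput type estimate. -/
lemma vdc {a : ℕ → ℂ} {C : ℝ} (ha : ∀ n, ‖a n‖ ≤ C) (hc : Corr a) (H : ℕ) (t ε : ℝ) (hε : 0 < ε)
    (hm : mm a (H + 1) t < ε ^ 2) :
    ∀ᶠ N in atTop, ‖cav (fun n => a n * ee (n * t)) N‖ < 2 * ε := by
  set u : ℕ → ℂ := fun n => a n * ee (n * t) with hu
  have hub : ∀ n, ‖u n‖ ≤ C := fun n => by rw [hu, norm_mul, ee_norm, mul_one]; exact ha n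
  set D : ℕ → ℂ := cav (fun n => ee (n * t) * bb a (H + 1) t n) with hD
  have hD2 : ∀ N, D N = cav (fun h => cav (fun n => u (n + h)) N) (H + 1) := by
    intro N
    have : ∀ n : ℕ, ee (n * t) * bb a (H + 1) t n = (((H + 1 : ℕ) : ℝ) : ℂ)⁻¹ *
        ∑ h ∈ range (H + 1), u (n + h) := by
      intro n
      simp only [bb, cav, Complex.real_smul]
      rw [mul_left_comm, Finset.mul_sum]
      push_cast
      congr 1
      refine Finset.sum_congr rfl fun h _ => ?_
      simp only [hu]
      rw [mul_left_comm, ← ee_add]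
      congr 2
      push_cast
      ring
    simp only [hD]
    simp_rw [this]
    rw [cav_mul_left, cav_finset_sum]
    simp [cav]
  have h1 : Tendsto (fun N => D N - cav u N) atTop (𝓝 0) := by
    have e : ∀ N, D N - cav u N = (((H + 1 : ℕ) : ℝ))⁻¹ •
        ∑ h ∈ range (H + 1), (cav (fun n => u (n + h)) N - cav u N) := by
      intro N
      rw [hD2, Finset.sum_sub_distrib, smul_sub, cav]
      congr 1
      rw [sum_const, card_range, ← Nat.cast_smul_eq_nsmul ℝ, smul_smul, inv_mul_cancel₀, one_smul]
      positivity
    simp_rw [e]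
    have := (tendsto_finsetSum (range (H + 1)) fun h _ => cav_shift u C hub h).const_smul
      (((H + 1 : ℕ) : ℝ))⁻¹
    simpa using this
  have h2 : ∀ N, ‖D N‖ ^ 2 ≤ cav (fun n => ‖bb a (H + 1) t n‖ ^ 2) N := by
    intro N
    refine le_trans ?_ (cav_sq_le _ N)
    refine pow_le_pow_left₀ (norm_nonneg _) ?_ 2
    refine (norm_cav_le _ N).trans (le_of_eq ?_)
    simp only [norm_mul, ee_norm, one_mul]
  have h3 := ((mm_lim hc (H + 1)).1 t).eventually_lt_const hm
  have h4 : ∀ᶠ N in atTop, ‖D N - cav u N‖ < ε := by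
    have := h1.norm
    rw [norm_zero] at this
    exact this.eventually_lt_const hε
  filter_upwards [h3, h4] with N h3 h4
  have h5 : ‖D N‖ < ε := lt_of_pow_lt_pow_left₀ 2 hε.le ((h2 N).trans_lt h3)
  calc ‖cav u N‖ = ‖D N - (D N - cav u N)‖ := by congr 1; ring
    _ ≤ ‖D N‖ + ‖D N - cav u N‖ := norm_sub_le _ _
    _ < 2 * ε := by linarith

lemma geom_cav {t : ℝ} (h : ee t ≠ 1) :
    Tendsto (cav (fun n => ee (n * t))) atTop (𝓝 0) := by
  have h2 : Tendsto (fun N : ℕ => (N : ℝ)⁻¹ * (2 / ‖ee t - 1‖)) atTop (𝓝 0) := by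
    simpa using (tendsto_inv_atTop_nhds_zero_nat (𝕜 := ℝ)).mul_const (2 / ‖ee t - 1‖)
  refine squeeze_zero_norm (fun N => ?_) h2
  simp only [cav, ee_nat_mul]
  rw [geom_sum_eq h, norm_smul, norm_inv, Real.norm_of_nonneg (Nat.cast_nonneg N), norm_div]
  gcongr
  refine (norm_sub_le _ _).trans ?_
  rw [norm_pow, ee_norm]
  norm_num

/-- Approximate Bessel inequality. -/
lemma bessel {b : ℕ → ℂ} {C : ℝ} (hb : ∀ n, ‖b n‖ ≤ C) (F : Finset ℝ) (H : ℕ) (hH : 0 < H)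
    (hF : ∑ s ∈ F, ∑ t ∈ F, (if s = t then 0 else ‖cav (fun h => ee (h * (s - t))) H‖) ≤ 1) :
    ∑ t ∈ F, ‖cav (fun h => b h * ee (h * t)) H‖ ^ 2 ≤ 2 * C ^ 2 := by
  have hC : 0 ≤ C := (norm_nonneg _).trans (hb 0)
  set c : ℝ → ℂ := fun t => cav (fun h => b h * ee (h * t)) H with hc
  have hcC : ∀ t, ‖c t‖ ≤ C := fun t => cav_norm_le _ C hC (fun h => by
    rw [norm_mul, ee_norm, mul_one]; exact hb h) H
  set S : ℝ := ∑ t ∈ F, ‖c t‖ ^ 2 with hS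
  have hS0 : 0 ≤ S := Finset.sum_nonneg fun t _ => by positivity
  set y : ℕ → ℂ := fun h => ∑ t ∈ F, (starRingEnd ℂ) (c t) * ee (h * t) with hy
  have h1 : (S : ℂ) = cav (fun h => b h * y h) H := by
    have : ∀ h, b h * y h = ∑ t ∈ F, (starRingEnd ℂ) (c t) * (b h * ee (h * t)) := by
      intro h
      rw [hy, Finset.mul_sum]
      exact Finset.sum_congr rfl fun t _ => by ring
    simp_rw [this]
    rw [cav_finset_sum, hS]
    push_cast
    refine Finset.sum_congr rfl fun t _ => ?_
    rw [cav_mul_left, ← Complex.mul_conj', mul_comm]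
  have h2 : S ≤ C * cav (fun h => ‖y h‖) H := by
    have : S = ‖(S : ℂ)‖ := by rw [Complex.norm_real, Real.norm_of_nonneg hS0]
    rw [this, h1]
    refine (norm_cav_le _ H).trans ?_
    have e : C * cav (fun h => ‖y h‖) H = cav (fun h => C * ‖y h‖) H := by
      simp only [cav, ← Finset.mul_sum, smul_eq_mul]; ring
    rw [e]
    refine cav_mono (fun h => ?_) H
    rw [norm_mul]
    exact mul_le_mul_of_nonneg_right (hb h) (norm_nonneg _)
  have h3 : cav (fun h => ‖y h‖ ^ 2) H ≤ S + C ^ 2 := by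
    have e1 : ∀ h : ℕ, ((‖y h‖ ^ 2 : ℝ) : ℂ) = ∑ s ∈ F, ∑ t ∈ F,
        ((starRingEnd ℂ) (c s) * c t) * ee (h * (s - t)) := by
      intro h
      push_cast
      rw [← Complex.mul_conj']
      simp only [hy, map_sum, map_mul, Complex.conj_conj, ee_conj]
      rw [Finset.sum_mul_sum]
      refine Finset.sum_congr rfl fun s _ => Finset.sum_congr rfl fun t _ => ?_
      have : (h : ℝ) * (s - t) = h * s + -(h * t) := by ring
      rw [this, ee_add]
      ring
    have e2 : ((cav (fun h => ‖y h‖ ^ 2) H : ℝ) : ℂ) = ∑ s ∈ F, ∑ t ∈ F,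
        ((starRingEnd ℂ) (c s) * c t) * cav (fun h => ee (h * (s - t))) H := by
      rw [cav_ofReal]
      simp_rw [e1]
      rw [cav_finset_sum]
      refine Finset.sum_congr rfl fun h _ => ?_
      rw [cav_finset_sum]
      refine Finset.sum_congr rfl fun h' _ => ?_
      rw [cav_mul_left]
    have e3 : cav (fun h => ‖y h‖ ^ 2) H ≤ ‖((cav (fun h => ‖y h‖ ^ 2) H : ℝ) : ℂ)‖ := by
      rw [Complex.norm_real]
      exact le_abs_self _
    refine e3.trans ?_
    rw [e2]
    have e4 : ∀ s ∈ F, ∀ t ∈ F, ‖((starRingEnd ℂ) (c s) * c t) * cav (fun h => ee (h * (s - t))) H‖ ≤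
        (if s = t then ‖c s‖ ^ 2 else 0) +
          C ^ 2 * (if s = t then 0 else ‖cav (fun h => ee (h * (s - t))) H‖) := by
      intro s _ t _
      rw [norm_mul, norm_mul, RCLike.norm_conj]
      split_ifs with hst
      · subst hst
        have : cav (fun h => ee (h * (s - s))) H = 1 := by
          simp [cav, ee_zero, hH.ne']
        rw [this]
        simp [sq]
      · rw [zero_add]
        gcongr
        rw [sq]
        exact mul_le_mul (hcC _) (hcC _) (norm_nonneg _) hC
    refine (norm_sum_le _ _).trans ?_
    refine (Finset.sum_le_sum fun s hs => (norm_sum_le _ _).trans (Finset.sum_le_sum (e4 s hs))).trans ?_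
    simp only [Finset.sum_add_distrib, ← Finset.mul_sum]
    have e5 : ∑ s ∈ F, ∑ t ∈ F, (if s = t then ‖c s‖ ^ 2 else 0) = S := by
      refine Finset.sum_congr rfl fun s hs => ?_
      simp [hs]
    rw [e5]
    have := mul_le_mul_of_nonneg_left hF (sq_nonneg C)
    linarith
  have h4 : S ^ 2 ≤ C ^ 2 * (S + C ^ 2) := by
    have h5 := (cav_sq_le (fun h => ‖y h‖) H).trans h3
    calc S ^ 2 ≤ (C * cav (fun h => ‖y h‖) H) ^ 2 := pow_le_pow_left₀ hS0 h2 2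
      _ = C ^ 2 * (cav (fun h => ‖y h‖) H) ^ 2 := by ring
      _ ≤ _ := by gcongr
  by_contra hcon
  push Not at hcon
  nlinarith [sq_nonneg C]

lemma finite_atoms {a : ℕ → ℂ} {C : ℝ} (ha : ∀ n, ‖a n‖ ≤ C) (hc : Corr a) (δ : ℝ) (hδ : 0 < δ)
    (p q : ℝ) (hpq : q < p + 1) :
    {t ∈ Set.Icc p q | ∀ H, δ ≤ mm a (H + 1) t}.Finite := by
  by_contra hinf
  obtain ⟨K, hK⟩ := exists_nat_gt (2 * C ^ 2 / δ)
  obtain ⟨F, hFs, hFc⟩ := Set.Infinite.exists_subset_card_eq hinf K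
  have h1 : Tendsto (fun H => ∑ s ∈ F, ∑ t ∈ F,
      (if s = t then 0 else ‖cav (fun h => ee (h * (s - t))) H‖)) atTop (𝓝 0) := by
    have : (0:ℝ) = ∑ s ∈ F, ∑ t ∈ F, (0:ℝ) := by simp
    rw [this]
    refine tendsto_finsetSum _ fun s hs => tendsto_finsetSum _ fun t ht => ?_
    by_cases hst : s = t
    · simp [hst]
    · simp only [hst, if_false]
      have hs' := (hFs hs).1
      have ht' := (hFs ht).1
      have := (geom_cav (ee_ne_one (t := s - t) (sub_ne_zero.2 hst) (by
        rw [abs_lt]; constructor <;> linarith [hs'.1, hs'.2, ht'.1, ht'.2]))).norm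
      simpa using this
  obtain ⟨H, hH1, hH0⟩ := ((h1.eventually_lt_const (u := 1) zero_lt_one).and
    (eventually_gt_atTop 0)).exists
  obtain ⟨H, rfl⟩ : ∃ k, H = k + 1 := ⟨H - 1, by omega⟩
  have h2 : ∀ n, ∑ t ∈ F, ‖bb a (H + 1) t n‖ ^ 2 ≤ 2 * C ^ 2 := fun n =>
    bessel (b := fun h => a (n + h)) (fun h => ha _) F (H + 1) hH0 hH1.le
  have h3 : Tendsto (fun N => ∑ t ∈ F, cav (fun n => ‖bb a (H + 1) t n‖ ^ 2) N) atTop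
      (𝓝 (∑ t ∈ F, mm a (H + 1) t)) :=
    tendsto_finsetSum _ fun t _ => (mm_lim hc (H + 1)).1 t
  have h4 : ∑ t ∈ F, mm a (H + 1) t ≤ 2 * C ^ 2 := by
    refine le_of_tendsto' h3 fun N => ?_
    rw [← cav_finset_sum_real]
    exact cav_le_of_le (by positivity) h2 N
  have h5 : (K : ℝ) * δ ≤ ∑ t ∈ F, mm a (H + 1) t := by
    rw [← hFc, ← nsmul_eq_mul]
    exact Finset.card_nsmul_le_sum _ _ _ fun t ht => (hFs ht).2 H
  rw [div_lt_iff₀ hδ] at hK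
  linarith

/-! ### Measurable selection of isolated frequencies -/

open Classical in
/-- Approximate selector. -/
noncomputable def selj (p q : ℚ) (δ : ℝ) (j : ℕ) (m : ℕ → ℚ → ℝ) : ℝ :=
  ⨆ r : ℚ, if (p ≤ r ∧ r ≤ q ∧ ∀ H ≤ j, δ - 1 / ((j : ℝ) + 1) < m H r) then (r : ℝ) else (p : ℝ)

/-- Selector. -/
noncomputable def sel (p q : ℚ) (δ : ℝ) (m : ℕ → ℚ → ℝ) : ℝ := ⨅ j, selj p q δ j m

lemma sel_meas (p q : ℚ) (δ : ℝ) : Measurable (sel p q δ) := by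
  refine Measurable.iInf fun j => Measurable.iSup fun r => ?_
  refine Measurable.ite ?_ measurable_const measurable_const
  refine MeasurableSet.inter (MeasurableSet.const _) (MeasurableSet.inter (MeasurableSet.const _) ?_)
  have : {m : ℕ → ℚ → ℝ | ∀ H ≤ j, δ - 1 / ((j : ℝ) + 1) < m H r} =
      ⋂ H, ⋂ (_ : H ≤ j), {m : ℕ → ℚ → ℝ | δ - 1 / ((j : ℝ) + 1) < m H r} := by
    ext m; simp
  change MeasurableSet {m : ℕ → ℚ → ℝ | ∀ H ≤ j, δ - 1 / ((j : ℝ) + 1) < m H r}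
  rw [this]
  refine MeasurableSet.iInter fun H => MeasurableSet.iInter fun _ => ?_
  refine measurableSet_lt measurable_const ?_
  fun_prop

lemma sel_eq {p q : ℚ} {δ : ℝ} {m : ℕ → ℝ → ℝ} (hm : ∀ H, Continuous (m H)) {t₀ : ℝ}
    (hp : (p : ℝ) < t₀) (hq : t₀ < q)
    (h : ∀ t ∈ Set.Icc (p : ℝ) q, ((∀ H, δ ≤ m H t) ↔ t = t₀)) :
    sel p q δ (fun H r => m H r) = t₀ := by
  classical
  have h0 : ∀ H, δ ≤ m H t₀ := (h t₀ ⟨hp.le, hq.le⟩).2 rfl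
  have hbdd : ∀ j : ℕ, BddAbove (Set.range fun r : ℚ =>
      if (p ≤ r ∧ r ≤ q ∧ ∀ H ≤ j, δ - 1 / ((j : ℝ) + 1) < m H r) then (r : ℝ) else (p : ℝ)) := by
    intro j
    refine ⟨q, ?_⟩
    rintro _ ⟨r, rfl⟩
    dsimp only
    split_ifs with hr
    · exact_mod_cast hr.2.1
    · exact (hp.trans hq).le
  have hlow : ∀ j, t₀ ≤ selj p q δ j (fun H r => m H r) := by
    intro j
    refine le_of_forall_lt fun c hc => ?_
    have hj : (0:ℝ) < 1 / ((j : ℝ) + 1) := by positivity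
    have hopen : IsOpen (Set.Ioo (max c p) (q : ℝ) ∩
        ⋂ H ∈ Finset.range (j + 1), {t | δ - 1 / ((j : ℝ) + 1) < m H t}) :=
      isOpen_Ioo.inter (isOpen_biInter_finset fun H _ => isOpen_lt continuous_const (hm H))
    obtain ⟨r, hr⟩ := (Rat.denseRange_cast (𝕜 := ℝ)).exists_mem_open hopen ⟨t₀, ⟨⟨max_lt hc hp, hq⟩, by
      simp only [Set.mem_iInter]
      intro H _
      show δ - 1 / ((j : ℝ) + 1) < m H t₀
      linarith [h0 H]⟩⟩
    obtain ⟨⟨hr1, hr2⟩, hr3⟩ := hr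
    have hr4 : ∀ H ≤ j, δ - 1 / ((j : ℝ) + 1) < m H r := by
      intro H hH
      have := Set.mem_iInter₂.1 hr3 H (Finset.mem_range.2 (by omega))
      exact this
    have hr5 : (p:ℝ) < r := (le_max_right _ _).trans_lt hr1
    refine lt_of_lt_of_le ((le_max_left _ _).trans_lt hr1) ?_
    refine le_trans (le_of_eq ?_) (le_ciSup (hbdd j) r)
    rw [if_pos ⟨by exact_mod_cast hr5.le, by exact_mod_cast hr2.le, hr4⟩]
  have hbb : BddBelow (Set.range fun j => selj p q δ j (fun H r => m H r)) :=
    ⟨t₀, by rintro _ ⟨j, rfl⟩; exact hlow j⟩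
  refine le_antisymm ?_ (le_ciInf hlow)
  by_contra hcon
  push Not at hcon
  obtain ⟨c, hc1, hc2⟩ := exists_between hcon
  have hr : ∀ j : ℕ, ∃ r : ℚ, c < r ∧ r ≤ q ∧ ∀ H ≤ j, δ - 1 / ((j : ℝ) + 1) < m H r := by
    intro j
    have h1 : c < selj p q δ j (fun H r => m H r) := hc2.trans_le (ciInf_le hbb j)
    obtain ⟨r, hr⟩ := exists_lt_of_lt_ciSup h1
    split_ifs at hr with h2
    · exact ⟨r, hr, h2.2⟩
    · linarith
  choose r hr1 hr2 hr3 using hr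
  obtain ⟨t, ht, φ, hφ, hlim⟩ := isCompact_Icc.tendsto_subseq (s := Set.Icc c (q : ℝ))
    (x := fun j => (r j : ℝ)) (fun j => ⟨(hr1 j).le, by exact_mod_cast hr2 j⟩)
  have h2 : ∀ H, δ ≤ m H t := by
    intro H
    have h3 : Tendsto (fun k => m H (r (φ k))) atTop (𝓝 (m H t)) := ((hm H).tendsto t).comp hlim
    have h4 : Tendsto (fun k => δ - 1 / (((φ k : ℕ) : ℝ) + 1)) atTop (𝓝 (δ - 0)) :=
      tendsto_const_nhds.sub (tendsto_one_div_add_atTop_nhds_zero_nat.comp hφ.tendsto_atTop)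
    rw [sub_zero] at h4
    refine le_of_tendsto_of_tendsto h4 h3 ?_
    filter_upwards [hφ.tendsto_atTop.eventually_ge_atTop H] with k hk
    exact (hr3 (φ k) H hk).le
  have := (h t ⟨by linarith [ht.1], ht.2⟩).1 h2
  linarith [ht.1]

/-! ### The bounded case -/

section main

variable {X : Type*} [MeasurableSpace X]

lemma skew {μ : Measure X} [IsProbabilityMeasure μ] {T : X → X} (hT : MeasurePreserving T μ μ)
    {g : X → ℂ} (hg : Measurable g) {C : ℝ} (hC : ∀ x, ‖g x‖ ≤ C)
    {τ : X → ℝ} (hτ : Measurable τ) (hτT : ∀ x, τ (T x) = τ x) :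
    ∀ᵐ x ∂μ, ∃ L : ℂ, Tendsto (cav (fun n => g (T^[n] x) * ee (n * τ x))) atTop (𝓝 L) := by
  set S : X × UnitAddCircle → X × UnitAddCircle :=
    fun z => (T z.1, ((τ z.1 : ℝ) : UnitAddCircle) + z.2) with hS
  have hq : Measurable fun x => ((τ x : ℝ) : UnitAddCircle) :=
    (AddCircle.measurable_mk').comp hτ
  have hSm : MeasurePreserving S (μ.prod volume) (μ.prod volume) := by
    refine hT.skew_product (g := fun x y => ((τ x : ℝ) : UnitAddCircle) + y) ?_ ?_
    · exact (hq.comp measurable_fst).add measurable_snd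
    · exact Eventually.of_forall fun x => (measurePreserving_add_left volume _).map_eq
  set F : X × UnitAddCircle → ℂ := fun z => g z.1 * fourier 1 z.2 with hF
  have hFm : Measurable F :=
    (hg.comp measurable_fst).mul ((fourier 1).continuous.measurable.comp measurable_snd)
  have hFb : ∀ z, ‖F z‖ ≤ C := by
    intro z
    rw [hF, norm_mul, fourier_one, Circle.norm_coe, mul_one]
    exact hC _
  have hiter : ∀ (n : ℕ) x y, S^[n] (x, y) = (T^[n] x, ((n * τ x : ℝ) : UnitAddCircle) + y) := by
    intro n
    induction n with
    | zero => intro x y; simp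
    | succ n ih =>
      intro x y
      rw [Function.iterate_succ_apply, Function.iterate_succ_apply, hS]
      simp only
      rw [← hS, ih, hτT, ← add_assoc, ← AddCircle.coe_add]
      congr 3
      push_cast
      ring
  have h1 := birkhoff_complex hSm hFm C hFb
  have h2 := Measure.ae_ae_of_ae_prod h1
  filter_upwards [h2] with x hx
  obtain ⟨y, L, hL⟩ := hx.exists
  have hy0 : (fourier 1 y : ℂ) ≠ 0 := by
    rw [fourier_one]; exact Circle.coe_ne_zero _
  refine ⟨(fourier 1 y)⁻¹ * L, ?_⟩
  refine (hL.const_mul (fourier 1 y)⁻¹).congr fun N => ?_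
  rw [← cav_mul_left]
  congr 1
  funext n
  rw [hiter, hF]
  simp only
  have : (fourier 1 (((n * τ x : ℝ) : UnitAddCircle) + y) : ℂ) = ee (n * τ x) * fourier 1 y := by
    rw [fourier_one, fourier_one, AddCircle.toCircle_add, Circle.coe_mul]
    congr 1
    rw [← fourier_one, fourier_coe_apply, ee]
    congr 1
    simp
  rw [this]
  field_simp

lemma mm_meas {T : X → X} (hT : Measurable T) {g : X → ℂ} (hg : Measurable g) (H : ℕ) (t : ℝ) :
    Measurable fun x => mm (fun n => g (T^[n] x)) H t := by
  refine Measurable.limsup fun N => ?_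
  simp only [cav, bb, smul_eq_mul]
  refine Measurable.const_mul ?_ _
  refine Finset.measurable_sum _ fun n _ => ?_
  refine Measurable.pow_const (Measurable.norm ?_) 2
  simp only [Complex.real_smul]
  refine Measurable.const_mul ?_ _
  refine Finset.measurable_sum _ fun h _ => ?_
  exact (hg.comp (hT.iterate _)).mul_const _

lemma ww_bdd {μ : Measure X} [IsProbabilityMeasure μ] {T : X → X} (hT : MeasurePreserving T μ μ)
    {g : X → ℂ} (hg : Measurable g) {C : ℝ} (hC : ∀ x, ‖g x‖ ≤ C) :
    ∀ᵐ x ∂μ, ∀ t : ℝ, ∃ L : ℂ, Tendsto (cav (fun n => g (T^[n] x) * ee (n * t))) atTop (𝓝 L) := by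
  set τ : ℚ → ℚ → ℕ → X → ℝ := fun p q k x =>
    sel p q (1 / ((k : ℝ) + 1)) (fun H r => mm (fun n => g (T^[n] x)) (H + 1) r) with hτ
  have hτm : ∀ p q k, Measurable (τ p q k) := fun p q k =>
    (sel_meas p q _).comp (measurable_pi_lambda _ fun H => measurable_pi_lambda _ fun r =>
      mm_meas hT.measurable hg (H + 1) r)
  have hτT : ∀ p q k x, τ p q k (T x) = τ p q k x := by
    intro p q k x
    simp only [hτ]
    congr 1
    funext H r
    rw [← mm_shift (a := fun n => g (T^[n] x)) (fun n => hC _)]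
    rfl
  have hcorr : ∀ᵐ x ∂μ, Corr (fun n => g (T^[n] x)) := by
    unfold Corr
    rw [ae_all_iff]; intro h
    rw [ae_all_iff]; intro h'
    have hm : Measurable fun x => g (T^[h] x) * (starRingEnd ℂ) (g (T^[h'] x)) :=
      (hg.comp (hT.measurable.iterate _)).mul
        (Complex.continuous_conj.measurable.comp (hg.comp (hT.measurable.iterate _)))
    have := birkhoff_complex hT hm (C * C) (fun x => by
      rw [norm_mul, RCLike.norm_conj]
      exact mul_le_mul (hC _) (hC _) (norm_nonneg _) ((norm_nonneg _).trans (hC x)))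
    filter_upwards [this] with x hx
    simpa only [← Function.iterate_add_apply, add_comm] using hx
  have hsel : ∀ᵐ x ∂μ, ∀ p q k, ∃ L : ℂ,
      Tendsto (cav (fun n => g (T^[n] x) * ee (n * τ p q k x))) atTop (𝓝 L) := by
    rw [ae_all_iff]; intro p
    rw [ae_all_iff]; intro q
    rw [ae_all_iff]; intro k
    exact skew hT hg hC (hτm p q k) (hτT p q k)
  filter_upwards [hcorr, hsel] with x hx1 hx2 t
  set a : ℕ → ℂ := fun n => g (T^[n] x) with ha
  have hab : ∀ n, ‖a n‖ ≤ C := fun n => hC _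
  by_cases hcase : ∀ k : ℕ, ∃ H, mm a (H + 1) t < 1 / ((k : ℝ) + 1)
  · refine ⟨0, ?_⟩
    rw [Metric.tendsto_atTop']
    intro ε hε
    obtain ⟨k, hk⟩ := exists_nat_one_div_lt (show (0:ℝ) < (ε / 2) ^ 2 by positivity)
    obtain ⟨H, hH⟩ := hcase k
    have := vdc hab hx1 H t (ε / 2) (by positivity) (hH.trans hk)
    obtain ⟨N, hN⟩ := eventually_atTop.1 this
    refine ⟨N, fun n hn => ?_⟩
    rw [dist_zero_right]
    have := hN n hn.le
    linarith
  · push Not at hcase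
    obtain ⟨k, hk⟩ := hcase
    have hfin := finite_atoms hab hx1 (1 / ((k : ℝ) + 1)) (by positivity) (t - 1 / 4) (t + 1 / 4)
      (by linarith)
    set Z := {s ∈ Set.Icc (t - 1 / 4) (t + 1 / 4) | ∀ H, 1 / ((k : ℝ) + 1) ≤ mm a (H + 1) s} with hZ
    have hnhds : (Z \ {t})ᶜ ∩ Set.Ioo (t - 1 / 4) (t + 1 / 4) ∈ 𝓝 t := by
      refine inter_mem ?_ (Ioo_mem_nhds (by linarith) (by linarith))
      exact (hfin.subset Set.sdiff_subset).isClosed.isOpen_compl.mem_nhds (by simp)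
    obtain ⟨l, u, ⟨hl, hu⟩, hlu⟩ := mem_nhds_iff_exists_Ioo_subset.1 hnhds
    obtain ⟨p, hp1, hp2⟩ := exists_rat_btwn hl
    obtain ⟨q, hq1, hq2⟩ := exists_rat_btwn hu
    have : τ p q k x = t := by
      refine sel_eq (m := fun H s => mm a (H + 1) s) (fun H => (mm_lim hx1 (H + 1)).2) hp2 hq1 ?_
      intro s hs
      constructor
      · intro h
        have h2 := hlu ⟨hp1.trans_le hs.1, hs.2.trans_lt hq2⟩
        by_contra hst
        exact h2.1 ⟨⟨⟨h2.2.1.le, h2.2.2.le⟩, h⟩, hst⟩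
      · rintro rfl
        exact hk
    have h3 := hx2 p q k
    rw [this] at h3
    exact h3

lemma ww_meas {μ : Measure X} [IsProbabilityMeasure μ] {T : X → X} (hT : MeasurePreserving T μ μ)
    {f : X → ℂ} (hfm : Measurable f) (hf : Integrable f μ) :
    ∀ᵐ x ∂μ, ∀ t : ℝ, ∃ L : ℂ, Tendsto (cav (fun n => f (T^[n] x) * ee (n * t))) atTop (𝓝 L) := by
  classical
  set g : ℕ → X → ℂ := fun k x => if ‖f x‖ ≤ k then f x else 0 with hg
  have hgm : ∀ k, Measurable (g k) := fun k =>
    Measurable.ite (measurableSet_le hfm.norm measurable_const) hfm measurable_const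
  have hgb : ∀ k x, ‖g k x‖ ≤ k := by
    intro k x
    simp only [hg]
    split_ifs with h
    · exact h
    · simp
  have hd : ∀ k x, ‖f x - g k x‖ ≤ ‖f x‖ := by
    intro k x
    simp only [hg]
    split_ifs with h
    · simp
    · simp
  have hdm : ∀ k, Measurable fun x => ‖f x - g k x‖ := fun k => (hfm.sub (hgm k)).norm
  have hdi : ∀ k, Integrable (fun x => ‖f x - g k x‖) μ := fun k =>
    hf.norm.mono' (hdm k).aestronglyMeasurable (Eventually.of_forall fun x => by
      rw [norm_norm]; exact hd k x)
  have hlim : Tendsto (fun k => ∫ x, ‖f x - g k x‖ ∂μ) atTop (𝓝 0) := by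
    have := tendsto_integral_of_dominated_convergence (μ := μ) (F := fun k x => ‖f x - g k x‖)
      (f := fun _ => (0:ℝ)) (fun x => ‖f x‖) (fun k => (hdm k).aestronglyMeasurable) hf.norm
      (fun k => Eventually.of_forall fun x => by rw [norm_norm]; exact hd k x)
      (Eventually.of_forall fun x => by
        refine tendsto_const_nhds.congr' ?_
        obtain ⟨K, hK⟩ := exists_nat_ge ‖f x‖
        filter_upwards [eventually_ge_atTop K] with k hk
        have : ‖f x‖ ≤ k := hK.trans (by exact_mod_cast hk)
        simp [hg, this])
    simpa using this
  have hsmall : ∀ᵐ x ∂μ, ∀ m : ℕ, ∃ k, ∀ N,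
      ‖cav (fun n => ‖f (T^[n] x) - g k (T^[n] x)‖) N‖ ≤ 1 / ((m : ℝ) + 1) := by
    rw [ae_all_iff]
    intro m
    have hc : (0:ℝ) < 1 / ((m : ℝ) + 1) := by positivity
    choose E hE1 hE2 hE3 using fun k => weak_type hT (hdm k) (hdi k) (fun x => norm_nonneg _)
      (1 / ((m : ℝ) + 1))
    have hz : μ.real (⋂ k, E k) = 0 := by
      refine le_antisymm ?_ measureReal_nonneg
      have h1 : ∀ k, 1 / ((m : ℝ) + 1) * μ.real (⋂ k, E k) ≤ ∫ x, ‖f x - g k x‖ ∂μ := fun k =>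
        (mul_le_mul_of_nonneg_left (measureReal_mono (Set.iInter_subset E k)) hc.le).trans (hE3 k)
      have h2 := ge_of_tendsto' hlim h1
      nlinarith
    have hz' : μ (⋂ k, E k) = 0 := (measureReal_eq_zero_iff).1 hz
    have hz2 : ∀ᵐ x ∂μ, x ∉ ⋂ k, E k := measure_eq_zero_iff_ae_notMem.1 hz'
    filter_upwards [hz2] with x hx
    simp only [Set.mem_iInter, not_forall] at hx
    obtain ⟨k, hk⟩ := hx
    refine ⟨k, fun N => ?_⟩
    have := hE2 k x hk N
    rwa [max_eq_left hc.le] at this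
  have hconv : ∀ᵐ x ∂μ, ∀ k, ∀ t : ℝ, ∃ L : ℂ,
      Tendsto (cav (fun n => g k (T^[n] x) * ee (n * t))) atTop (𝓝 L) := by
    rw [ae_all_iff]
    intro k
    exact ww_bdd hT (hgm k) (hgb k)
  filter_upwards [hsmall, hconv] with x hx1 hx2 t
  refine cauchySeq_tendsto_of_complete ?_
  rw [Metric.cauchySeq_iff']
  intro ε hε
  obtain ⟨m, hm⟩ := exists_nat_one_div_lt (show (0:ℝ) < ε / 4 by positivity)
  obtain ⟨k, hk⟩ := hx1 m
  obtain ⟨L, hL⟩ := hx2 k t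
  obtain ⟨N, hN⟩ := Metric.cauchySeq_iff'.1 hL.cauchySeq (ε / 4) (by positivity)
  have hdiff : ∀ n, dist (cav (fun n => f (T^[n] x) * ee (n * t)) n)
      (cav (fun n => g k (T^[n] x) * ee (n * t)) n) < ε / 4 := by
    intro n
    have e : cav (fun n => f (T^[n] x) * ee (n * t)) n - cav (fun n => g k (T^[n] x) * ee (n * t)) n
        = cav (fun n => (f (T^[n] x) - g k (T^[n] x)) * ee (n * t)) n := by
      simp only [cav, ← smul_sub, ← Finset.sum_sub_distrib, sub_mul]
    rw [dist_eq_norm, e]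
    refine lt_of_le_of_lt ?_ hm
    refine (norm_cav_le _ n).trans ?_
    simp only [norm_mul, ee_norm, mul_one]
    exact (le_abs_self _).trans (hk n)
  refine ⟨N, fun n hn => ?_⟩
  have h1 := hdiff n
  have h2 := hdiff N
  have h3 := hN n hn
  rw [dist_comm] at h2
  have h4 := dist_triangle4 (cav (fun n => f (T^[n] x) * ee (n * t)) n)
    (cav (fun n => g k (T^[n] x) * ee (n * t)) n)
    (cav (fun n => g k (T^[n] x) * ee (n * t)) N)
    (cav (fun n => f (T^[n] x) * ee (n * t)) N)
  linarith

end main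

end WW

/-- **Wiener–Wintner ergodic theorem.** For a measure-preserving system on a probability
space and `f ∈ L¹(μ)`, there is a single set of full measure such that for every point `x`
in it and every `t ∈ [0,1)`, the weighted averages
`(1/N) ∑_{n=1}^N f(Tⁿ x) e^{2πint}` converge. -/
theorem wiener_wintner {X : Type*} [MeasurableSpace X] (μ : Measure X)
    [IsProbabilityMeasure μ] (T : X → X) (hT : MeasurePreserving T μ μ)
    (f : X → ℂ) (hf : Integrable f μ) :
    ∃ Xf : Set X, μ Xfᶜ = 0 ∧ ∀ x ∈ Xf, ∀ t ∈ Set.Ico (0 : ℝ) 1,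
      ∃ L : ℂ, Tendsto (fun N : ℕ =>
          (N : ℂ)⁻¹ * ∑ n ∈ Finset.range N,
            f (T^[n + 1] x) * Complex.exp (2 * Real.pi * Complex.I * (n + 1 : ℕ) * t))
        atTop (nhds L) := by
  have hfT : Integrable (f ∘ T) μ := hT.integrable_comp_of_integrable hf
  obtain ⟨f', hf'm, hff'⟩ := hfT.aestronglyMeasurable
  have hf'i : Integrable f' μ := hfT.congr hff'
  have h1 := WW.ww_meas hT hf'm.measurable hf'i
  have h2 : ∀ᵐ x ∂μ, ∀ n : ℕ, f (T^[n + 1] x) = f' (T^[n] x) := by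
    rw [ae_all_iff]
    intro n
    have := (hT.iterate n).quasiMeasurePreserving.ae hff'
    filter_upwards [this] with x hx
    rw [← hx, Function.iterate_succ_apply']
    rfl
  refine ⟨{x | (∀ t : ℝ, ∃ L : ℂ, Tendsto (WW.cav (fun n => f' (T^[n] x) * WW.ee (n * t))) atTop
    (nhds L)) ∧ ∀ n : ℕ, f (T^[n + 1] x) = f' (T^[n] x)}, ?_, ?_⟩
  · exact (h1.and h2)
  · rintro x ⟨hx1, hx2⟩ t _
    obtain ⟨L, hL⟩ := hx1 t
    refine ⟨WW.ee t * L, (hL.const_mul (WW.ee t)).congr fun N => ?_⟩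
    rw [← WW.cav_mul_left, WW.cav, Complex.real_smul]
    push_cast
    congr 1
    refine Finset.sum_congr rfl fun n _ => ?_
    rw [hx2, mul_left_comm, ← WW.ee_add, WW.ee]
    congr 2
    push_cast
    ring
end

section
/- Let (a_n) be a bounded real sequence and k ≥ 1. For h = (h₁,...,h_k) ∈ ℕ^k suppose c_h = lim_N (1/N) ∑_{n=0}^{N-1} ∏_{ε ∈ {0,1}^k} a_{n + ε·h} exists for every h. If additionally the limit lim_H (1/H^k) ∑_{h₁,...,h_k=0}^{H-1} c_h exists, then it is nonnegative. -/
open Filter Finset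

/-- tent weights on the nonnegative half line -/
noncomputable def wt (s x : ℕ) : ℝ := if x = 0 then (s : ℝ) else 2 * ((s - x : ℕ) : ℝ)

lemma wt_nonneg (s x : ℕ) : 0 ≤ wt s x := by
  unfold wt; split_ifs <;> positivity

lemma wt_zero {s x : ℕ} (h : s ≤ x) : wt s x = 0 := by
  unfold wt; split_ifs with h0
  · have : s = 0 := by omega
    simp [this]
  · simp [Nat.sub_eq_zero_of_le h]

lemma wt_succ (s x : ℕ) (hx : x < s + 1) :
    wt (s+1) x = wt s x + (if x = 0 then 1 else 2) := by
  unfold wt; split_ifs with h0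
  · push_cast; ring
  · have : s + 1 - x = (s - x) + 1 := by omega
    rw [this]; push_cast; ring

lemma wt_sum_aux (g : ℕ → ℝ) (s : ℕ) :
    ∑ i ∈ range s, ∑ j ∈ range s, g (Nat.dist i j) = ∑ x ∈ range s, wt s x * g x := by
  induction s with
  | zero => simp
  | succ s ih =>
    have e1 : ∑ i ∈ range (s+1), ∑ j ∈ range (s+1), g (Nat.dist i j)
        = ∑ i ∈ range s, ∑ j ∈ range s, g (Nat.dist i j) + 2 * ∑ i ∈ range s, g (i+1) + g 0 := by
      rw [sum_range_succ]
      simp_rw [sum_range_succ]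
      rw [sum_add_distrib]
      have a1 : ∑ i ∈ range s, g (Nat.dist i s) = ∑ i ∈ range s, g (i+1) := by
        rw [← sum_range_reflect (fun i => g (i+1))]
        apply sum_congr rfl
        intro i hi
        have := mem_range.1 hi
        congr 1
        unfold Nat.dist
        omega
      have a2 : ∑ i ∈ range s, g (Nat.dist s i) = ∑ i ∈ range s, g (i+1) := by
        rw [← a1]; simp_rw [Nat.dist_comm]
      rw [a1, a2, Nat.dist_self]; ring
    have e2 : ∑ x ∈ range (s+1), wt (s+1) x * g x
       = ∑ x ∈ range (s+1), wt s x * g x + ∑ x ∈ range (s+1), (if x = 0 then 1 else 2) * g x := by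
      rw [← sum_add_distrib]
      apply sum_congr rfl
      intro x hx
      rw [wt_succ s x (mem_range.1 hx)]; ring
    rw [e1, e2, ih, sum_range_succ (fun x => wt s x * g x), wt_zero le_rfl, sum_range_succ',
      mul_sum]
    simp
    ring

lemma wt_sum (g : ℕ → ℝ) {s R : ℕ} (h : s ≤ R) :
    ∑ i ∈ range s, ∑ j ∈ range s, g (Nat.dist i j) = ∑ x ∈ range R, wt s x * g x := by
  rw [wt_sum_aux]
  apply sum_subset (range_mono h)
  intro x _ hx
  rw [wt_zero (by simpa using hx), zero_mul]

/-- Cesaro averages -/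
noncomputable def avg (x : ℕ → ℝ) (N : ℕ) : ℝ := (N : ℝ)⁻¹ * ∑ n ∈ range N, x n

lemma avg_shift {x : ℕ → ℝ} {C l : ℝ} (hx : ∀ n, |x n| ≤ C)
    (h : Tendsto (avg x) atTop (nhds l)) (j : ℕ) :
    Tendsto (avg fun n => x (n + j)) atTop (nhds l) := by
  induction j with
  | zero => simpa using h
  | succ j ih =>
    have e : ∀ N, avg (fun n => x (n + (j+1))) N
        = avg (fun n => x (n+j)) N + (N:ℝ)⁻¹ * (x (N + j) - x j) := by
      intro N
      unfold avg
      rw [← mul_add]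
      congr 1
      have h1 := sum_range_succ (fun n => x (n+j)) N
      have h2 := sum_range_succ' (fun n => x (n+j)) N
      simp only [zero_add] at h2
      have : ∀ n, n + 1 + j = n + (j+1) := fun n => by ring
      simp only [this] at h2
      linarith
    have z : Tendsto (fun N : ℕ => (N:ℝ)⁻¹ * (x (N + j) - x j)) atTop (nhds 0) := by
      apply squeeze_zero_norm (a := fun N : ℕ => (N:ℝ)⁻¹ * (2 * C))
      · intro N
        rw [norm_mul, Real.norm_of_nonneg (by positivity)]
        gcongr
        rw [Real.norm_eq_abs]
        have := abs_sub (x (N+j)) (x j)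
        linarith [hx (N+j), hx j]
      · have := (tendsto_inv_atTop_nhds_zero_nat (𝕜 := ℝ)).mul_const (2*C)
        simpa using this
    have := ih.add z
    rw [add_zero] at this
    exact this.congr fun N => (e N).symm

lemma avg_sum {ι : Type*} (T : Finset ι) (x : ι → ℕ → ℝ) (l : ι → ℝ)
    (h : ∀ i ∈ T, Tendsto (avg (x i)) atTop (nhds (l i))) :
    Tendsto (avg fun n => ∑ i ∈ T, x i n) atTop (nhds (∑ i ∈ T, l i)) := by
  have := tendsto_finsetSum T h
  refine this.congr fun N => ?_
  unfold avg
  rw [sum_comm, mul_sum]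

lemma avg_mono {x y : ℕ → ℝ} (h : ∀ n, x n ≤ y n) (N : ℕ) : avg x N ≤ avg y N := by
  unfold avg
  gcongr
  exact h _

section oneD
variable {F g : ℕ → ℝ} {C : ℝ}

lemma corr (hF : ∀ n, |F n| ≤ C)
    (h : ∀ x, Tendsto (avg fun n => F n * F (n + x)) atTop (nhds (g x))) (i j : ℕ) :
    Tendsto (avg fun n => F (n + i) * F (n + j)) atTop (nhds (g (Nat.dist i j))) := by
  have hb : ∀ x n, |F n * F (n + x)| ≤ C * C := fun x n => by
    rw [abs_mul]
    exact mul_le_mul (hF _) (hF _) (abs_nonneg _) ((abs_nonneg _).trans (hF 0))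
  rcases le_total i j with hij | hij
  · have := avg_shift (hb (j - i)) (h (j-i)) i
    rw [Nat.dist_eq_sub_of_le hij]
    refine this.congr fun N => ?_
    have e : ∀ n, n + i + (j - i) = n + j := fun n => by omega
    simp only [e]
  · have := avg_shift (hb (i - j)) (h (i-j)) j
    rw [Nat.dist_eq_sub_of_le_right hij]
    refine this.congr fun N => ?_
    have e : ∀ n, n + j + (i - j) = n + i := fun n => by omega
    simp only [e, mul_comm]

lemma corr_sq (hF : ∀ n, |F n| ≤ C)
    (h : ∀ x, Tendsto (avg fun n => F n * F (n + x)) atTop (nhds (g x))) (s r : ℕ) :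
    Tendsto (avg fun n => (∑ i ∈ range s, F (n + r + i))^2) atTop
      (nhds (∑ i ∈ range s, ∑ j ∈ range s, g (Nat.dist i j))) := by
  have := avg_sum (range s) (fun i n => ∑ j ∈ range s, F (n + (r + i)) * F (n + (r+j)))
    (fun i => ∑ j ∈ range s, g (Nat.dist i j)) (fun i _ => by
      apply avg_sum
      intro j _
      have := corr hF h (r+i) (r+j)
      rwa [Nat.dist_add_add_left] at this)
  refine this.congr fun N => ?_
  congr 1
  funext n
  rw [sq, sum_mul_sum]
  simp only [add_assoc]

lemma Q_nonneg (hF : ∀ n, |F n| ≤ C)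
    (h : ∀ x, Tendsto (avg fun n => F n * F (n + x)) atTop (nhds (g x))) (s : ℕ) :
    0 ≤ ∑ i ∈ range s, ∑ j ∈ range s, g (Nat.dist i j) := by
  refine ge_of_tendsto' (corr_sq hF h s 0) fun N => ?_
  unfold avg
  exact mul_nonneg (by positivity) (sum_nonneg fun _ _ => sq_nonneg _)

lemma Q_mul (hF : ∀ n, |F n| ≤ C)
    (h : ∀ x, Tendsto (avg fun n => F n * F (n + x)) atTop (nhds (g x))) (m s : ℕ) :
    ∑ i ∈ range (m * s), ∑ j ∈ range (m * s), g (Nat.dist i j) ≤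
      (m:ℝ)^2 * ∑ i ∈ range s, ∑ j ∈ range s, g (Nat.dist i j) := by
  have h1 := corr_sq hF h (m*s) 0
  have h2 := avg_sum (range m) (fun r n => (m:ℝ) * (∑ i ∈ range s, F (n + r * s + i))^2)
    (fun r => (m:ℝ) * ∑ i ∈ range s, ∑ j ∈ range s, g (Nat.dist i j)) (fun r _ => by
      have := (corr_sq hF h s (r*s)).const_mul (m:ℝ)
      refine this.congr fun N => ?_
      unfold avg
      rw [← mul_sum]; ring)
  simp only [sum_const, card_range, nsmul_eq_mul] at h2
  rw [sq, mul_assoc]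
  refine le_of_tendsto_of_tendsto' h1 h2 fun N => avg_mono (fun n => ?_) N
  have e : ∑ i ∈ range (m*s), F (n + 0 + i) = ∑ r ∈ range m, ∑ i ∈ range s, F (n + r*s + i) := by
    clear h1 h2
    induction m with
    | zero => simp
    | succ m ih =>
      rw [Nat.succ_mul, sum_range_add, ih, sum_range_succ]
      simp [add_assoc]
  rw [e, ← mul_sum]
  have := sq_sum_le_card_mul_sum_sq (s := range m) (f := fun r => ∑ i ∈ range s, F (n + r*s + i))
  simpa using this
end oneD

lemma cube_split {k : ℕ} (a : ℕ → ℝ) (l : Fin k) (h : Fin k → ℕ) (n x : ℕ) :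
    ∏ ε : Fin k → Bool, a (n + ∑ i, if ε i then Function.update h l x i else 0)
    = (∏ ε ∈ univ.filter (fun ε : Fin k → Bool => ε l = false), a (n + ∑ i, if ε i then h i else 0))
     * (∏ ε ∈ univ.filter (fun ε : Fin k → Bool => ε l = false),
        a (n + x + ∑ i, if ε i then h i else 0)) := by
  rw [← prod_filter_mul_prod_filter_not univ (fun ε : Fin k → Bool => ε l = false)]
  congr 1
  · apply prod_congr rfl
    intro ε hε
    have hε : ε l = false := by simpa using hε
    congr 2
    apply sum_congr rfl
    intro i _
    by_cases hi : i = l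
    · subst hi; simp [hε]
    · simp [hi]
  · refine prod_nbij' (fun ε => Function.update ε l false) (fun ε => Function.update ε l true)
      ?_ ?_ ?_ ?_ ?_
    · intro ε _; simp
    · intro ε _; simp
    · intro ε hε
      have : ε l = true := by simpa using hε
      simp [← this]
    · intro ε hε
      have : ε l = false := by simpa using hε
      simp [← this]
    · intro ε hε
      have hε : ε l = true := by simpa using hε
      congr 1
      rw [add_assoc]
      congr 1
      rw [← add_sum_erase univ _ (mem_univ l), ← add_sum_erase univ _ (mem_univ l)]
      simp only [hε, Function.update_self]
      simp only [if_true, Bool.false_eq_true, if_false, zero_add]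
      congr 1
      apply sum_congr rfl
      intro i hi
      have hi : i ≠ l := by simpa using hi
      simp [hi]

lemma sum_update {k : ℕ} (R : ℕ) (l : Fin k) (f : (Fin k → ℕ) → ℝ) :
    (R : ℝ) * ∑ h ∈ Fintype.piFinset (fun _ : Fin k => range R), f h =
    ∑ h ∈ Fintype.piFinset (fun _ : Fin k => range R), ∑ x ∈ range R,
      f (Function.update h l x) := by
  rw [← sum_product']
  have : (R : ℝ) * ∑ h ∈ Fintype.piFinset (fun _ : Fin k => range R), f h
     = ∑ p ∈ Fintype.piFinset (fun _ : Fin k => range R) ×ˢ range R, f p.1 := by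
    rw [sum_product]
    simp [mul_sum]
  rw [this]
  have key : ∀ p ∈ Fintype.piFinset (fun _ : Fin k => range R) ×ˢ range R,
      ((Function.update p.1 l p.2, p.1 l) : (Fin k → ℕ) × ℕ) ∈
        Fintype.piFinset (fun _ : Fin k => range R) ×ˢ range R := by
    rintro ⟨h, x⟩ hp
    simp only [mem_product, Fintype.mem_piFinset, mem_range] at hp ⊢
    refine ⟨fun i => ?_, hp.1 l⟩
    by_cases hi : i = l
    · subst hi; simpa using hp.2
    · simpa [hi] using hp.1 i
  refine sum_nbij' (fun p => (Function.update p.1 l p.2, p.1 l))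
    (fun p => (Function.update p.1 l p.2, p.1 l)) key key ?_ ?_ ?_
  · rintro ⟨h, x⟩ _; simp
  · rintro ⟨h, x⟩ _; simp
  · rintro ⟨h, x⟩ _; simp

structure PD {k : ℕ} (c : (Fin k → ℕ) → ℝ) : Prop where
  nonneg : ∀ l h s, 0 ≤ ∑ i ∈ range s, ∑ j ∈ range s, c (Function.update h l (Nat.dist i j))
  mul : ∀ l h m s, ∑ i ∈ range (m * s), ∑ j ∈ range (m * s),
      c (Function.update h l (Nat.dist i j)) ≤
      (m:ℝ)^2 * ∑ i ∈ range s, ∑ j ∈ range s, c (Function.update h l (Nat.dist i j))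

noncomputable def GG {k : ℕ} (c : (Fin k → ℕ) → ℝ) (s : Fin k → ℕ) : ℝ :=
  ∑ h ∈ Fintype.piFinset (fun l => range (s l)), (∏ l, wt (s l) (h l)) * c h

lemma GG_eq {k : ℕ} (c : (Fin k → ℕ) → ℝ) {s : Fin k → ℕ} {R : ℕ} (hR : ∀ l, s l ≤ R) :
    GG c s = ∑ h ∈ Fintype.piFinset (fun _ : Fin k => range R), (∏ l, wt (s l) (h l)) * c h := by
  apply sum_subset
  · exact Fintype.piFinset_subset _ _ fun l => range_mono (hR l)
  · intro h _ hh
    simp only [Fintype.mem_piFinset, mem_range, not_forall, not_lt] at hh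
    obtain ⟨l, hl⟩ := hh
    rw [prod_eq_zero (mem_univ l) (wt_zero hl), zero_mul]

lemma GG_coord {k : ℕ} (c : (Fin k → ℕ) → ℝ) {s : Fin k → ℕ} {R : ℕ} (hR : ∀ l, s l ≤ R)
    (l : Fin k) :
    R * GG c s = ∑ h ∈ Fintype.piFinset (fun _ : Fin k => range R),
      (∏ j ∈ univ.erase l, wt (s j) (h j)) *
        ∑ i ∈ range (s l), ∑ j ∈ range (s l), c (Function.update h l (Nat.dist i j)) := by
  rw [GG_eq c hR, sum_update R l]
  apply sum_congr rfl
  intro h _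
  rw [wt_sum (fun x => c (Function.update h l x)) (hR l), mul_sum]
  apply sum_congr rfl
  intro x _
  rw [← mul_prod_erase univ _ (mem_univ l), Function.update_self]
  have : ∏ j ∈ univ.erase l, wt (s j) (Function.update h l x j)
      = ∏ j ∈ univ.erase l, wt (s j) (h j) := by
    apply prod_congr rfl
    intro j hj
    have hj : j ≠ l := by simpa using hj
    simp [hj]
  rw [this]; ring

lemma exists_R {k : ℕ} (s t : Fin k → ℕ) : ∃ R : ℕ, 0 < R ∧ (∀ l, s l ≤ R) ∧ ∀ l, t l ≤ R := by
  refine ⟨∑ l, s l + ∑ l, t l + 1, by omega, fun l => ?_, fun l => ?_⟩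
  · have := single_le_sum (f := s) (fun i _ => Nat.zero_le _) (mem_univ l)
    omega
  · have := single_le_sum (f := t) (fun i _ => Nat.zero_le _) (mem_univ l)
    omega

lemma GG_nonneg {k : ℕ} {c : (Fin k → ℕ) → ℝ} (hc : PD c) (l : Fin k) (s : Fin k → ℕ) :
    0 ≤ GG c s := by
  obtain ⟨R, hR, h1, -⟩ := exists_R s s
  have hR' : (0:ℝ) < R := by exact_mod_cast hR
  refine nonneg_of_mul_nonneg_right ?_ hR'
  rw [GG_coord c h1 l]
  exact sum_nonneg fun h _ => mul_nonneg (prod_nonneg fun _ _ => wt_nonneg _ _) (hc.nonneg l h _)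

lemma GG_step {k : ℕ} {c : (Fin k → ℕ) → ℝ} (hc : PD c) (l : Fin k) (s : Fin k → ℕ) (m : ℕ) :
    GG c (Function.update s l (m * s l)) ≤ (m:ℝ)^2 * GG c s := by
  obtain ⟨R, hR, h1, h2⟩ := exists_R s (Function.update s l (m * s l))
  have hR' : (0:ℝ) < R := by exact_mod_cast hR
  refine le_of_mul_le_mul_left ?_ hR'
  rw [mul_left_comm, GG_coord c h1 l, GG_coord c h2 l, mul_sum]
  apply sum_le_sum
  intro h _
  have : ∏ j ∈ univ.erase l, wt (Function.update s l (m * s l) j) (h j)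
      = ∏ j ∈ univ.erase l, wt (s j) (h j) := by
    apply prod_congr rfl
    intro j hj
    have hj : j ≠ l := by simpa using hj
    simp [hj]
  rw [this, Function.update_self, mul_left_comm]
  exact mul_le_mul_of_nonneg_left (hc.mul l h m (s l)) (prod_nonneg fun _ _ => wt_nonneg _ _)

lemma GG_mul {k : ℕ} {c : (Fin k → ℕ) → ℝ} (hc : PD c) (s m : Fin k → ℕ) :
    GG c (fun l => m l * s l) ≤ (∏ l, (m l:ℝ)^2) * GG c s := by
  have : ∀ T : Finset (Fin k), GG c (fun l => if l ∈ T then m l * s l else s l)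
      ≤ (∏ l ∈ T, (m l:ℝ)^2) * GG c s := by
    intro T
    induction T using Finset.induction_on with
    | empty => simp
    | insert l T hl ih =>
      rw [prod_insert hl]
      have := GG_step hc l (fun l => if l ∈ T then m l * s l else s l) (m l)
      simp only [hl, if_false] at this
      have e : (fun j => if j ∈ insert l T then m j * s j else s j)
        = Function.update (fun l => if l ∈ T then m l * s l else s l) l (m l * s l) := by
        funext j
        by_cases hj : j = l
        · subst hj; simp
        · simp [hj]
      rw [e, mul_assoc]
      exact this.trans (mul_le_mul_of_nonneg_left ih (sq_nonneg _))
  simpa using this univ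

noncomputable def bb {k : ℕ} (c : (Fin k → ℕ) → ℝ) (s : Fin k → ℕ) : ℝ :=
  GG c s / ∏ l, (s l : ℝ)^2

lemma bb_dvd {k : ℕ} {c : (Fin k → ℕ) → ℝ} (hc : PD c) {s t : Fin k → ℕ}
    (ht : ∀ l, 0 < t l) (hst : ∀ l, s l ∣ t l) : bb c t ≤ bb c s := by
  choose m hm using hst
  have hs : ∀ l, 0 < s l := fun l => Nat.pos_of_dvd_of_pos ⟨m l, hm l⟩ (ht l)
  have hm0 : ∀ l, 0 < m l := fun l => Nat.pos_of_ne_zero fun h0 => by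
    have := ht l; rw [hm l, h0] at this; simp at this
  obtain rfl : t = fun l => m l * s l := funext fun l => by rw [hm l, mul_comm]
  have p1 : 0 < ∏ l, (s l : ℝ)^2 := prod_pos fun l _ => by have := hs l; positivity
  have p2 : 0 < ∏ l, (m l : ℝ)^2 := prod_pos fun l _ => by have := hm0 l; positivity
  have e : ∏ l, ((m l * s l : ℕ) : ℝ)^2 = (∏ l, (m l : ℝ)^2) * ∏ l, (s l : ℝ)^2 := by
    rw [← prod_mul_distrib]; simp [mul_pow]
  unfold bb
  rw [e, div_le_div_iff₀ (by positivity) p1]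
  have := mul_le_mul_of_nonneg_right (GG_mul hc s m) p1.le
  linarith

lemma bb_limit {k : ℕ} {c : (Fin k → ℕ) → ℝ} (hc : PD c) (l₀ : Fin k) :
    ∃ β : ℝ, 0 ≤ β ∧ ∀ m : Fin k → ℕ, (∀ l, 0 < m l) →
      Tendsto (fun i : ℕ => bb c (fun l => m l * i.factorial)) atTop (nhds β) := by
  have hnn : ∀ s, 0 ≤ bb c s := fun s =>
    div_nonneg (GG_nonneg hc l₀ s) (prod_nonneg fun _ _ => sq_nonneg _)
  have hanti : Antitone (fun i : ℕ => bb c (fun _ => i.factorial)) := by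
    intro i j hij
    exact bb_dvd hc (fun _ => Nat.factorial_pos _) fun _ => Nat.factorial_dvd_factorial hij
  have hbdd : BddBelow (Set.range (fun i : ℕ => bb c (fun _ => i.factorial))) :=
    ⟨0, by rintro _ ⟨i, rfl⟩; exact hnn _⟩
  have hlim := tendsto_atTop_ciInf hanti hbdd
  refine ⟨_, ge_of_tendsto' hlim fun i => hnn _, fun m hm => ?_⟩
  obtain ⟨M, -, hM, -⟩ := exists_R m m
  refine tendsto_of_tendsto_of_tendsto_of_le_of_le ((tendsto_add_atTop_iff_nat M).2 hlim) hlim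
    (fun i => ?_) (fun i => ?_)
  · refine bb_dvd hc (fun _ => Nat.factorial_pos _) fun l => ?_
    have h1 : m l ∣ M.factorial := Nat.dvd_factorial (hm l) (hM l)
    have h2 := Nat.factorial_mul_factorial_dvd_factorial_add i M
    rw [mul_comm] at h2
    exact (Nat.mul_dvd_mul_right h1 _).trans h2
  · exact bb_dvd hc (fun l => Nat.mul_pos (hm l) (Nat.factorial_pos _)) fun l => Dvd.intro_left _ rfl

/-- trapezoid sums -/
noncomputable def VV {k : ℕ} (c : (Fin k → ℕ) → ℝ) (m s : ℕ) : ℝ :=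
  ∑ h ∈ Fintype.piFinset (fun _ : Fin k => range ((m+1)*s)),
    (∏ l, (wt ((m+1)*s) (h l) - wt (m*s) (h l))) * c h

lemma VV_limit {k : ℕ} {c : (Fin k → ℕ) → ℝ} {β : ℝ}
    (hβ : ∀ m : Fin k → ℕ, (∀ l, 0 < m l) →
      Tendsto (fun i : ℕ => bb c (fun l => m l * i.factorial)) atTop (nhds β))
    {m : ℕ} (hm : 0 < m) :
    Tendsto (fun i : ℕ => VV c m i.factorial / ((i.factorial : ℝ)^2)^k) atTop
      (nhds (β * (2 * m + 1)^k)) := by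
  let μ : Finset (Fin k) → Fin k → ℕ := fun t l => if l ∈ t then m else m + 1
  have hμ : ∀ t l, 0 < μ t l := fun t l => by simp only [μ]; split_ifs <;> omega
  have e1 : ∀ s, VV c m s = ∑ t ∈ (univ : Finset (Fin k)).powerset,
      (-1:ℝ)^(#t) * GG c (fun l => μ t l * s) := by
    intro s
    unfold VV
    simp_rw [prod_sub, sum_mul]
    rw [sum_comm]
    apply sum_congr rfl
    intro t _
    rw [GG_eq c (R := (m+1)*s), mul_sum]
    · apply sum_congr rfl
      intro h _
      rw [← mul_assoc]
      congr 1
      rw [mul_assoc]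
      congr 1
      rw [← prod_sdiff (subset_univ t)]
      congr 1
      · apply prod_congr rfl
        intro l hl
        have : l ∉ t := by simpa using hl
        simp [μ, this]
      · apply prod_congr rfl
        intro l hl
        simp [μ, hl]
    · intro l
      apply Nat.mul_le_mul_right
      simp only [μ]; split_ifs <;> omega
  have e2 : β * (2 * m + 1)^k = ∑ t ∈ (univ : Finset (Fin k)).powerset,
      (-1:ℝ)^(#t) * (β * ∏ l, (μ t l : ℝ)^2) := by
    have : ((2:ℝ) * m + 1)^k = ∏ l : Fin k, (((m:ℝ)+1)^2 - (m:ℝ)^2) := by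
      simp; congr 1; ring
    rw [this, prod_sub, mul_sum]
    apply sum_congr rfl
    intro t _
    rw [← prod_sdiff (subset_univ t)]
    have a1 : ∏ l ∈ univ \ t, (μ t l : ℝ)^2 = ∏ l ∈ univ \ t, ((m:ℝ)+1)^2 := by
      apply prod_congr rfl
      intro l hl
      have : l ∉ t := by simpa using hl
      simp [μ, this]
    have a2 : ∏ l ∈ t, (μ t l : ℝ)^2 = ∏ l ∈ t, (m:ℝ)^2 := by
      apply prod_congr rfl
      intro l hl
      simp [μ, hl]
    rw [a1, a2]; ring
  rw [e2]
  have := tendsto_finsetSum (univ : Finset (Fin k)).powerset fun t _ =>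
    ((hβ (μ t) (hμ t)).mul_const (∏ l, (μ t l : ℝ)^2)).const_mul ((-1:ℝ)^(#t))
  refine this.congr fun i => ?_
  rw [e1, sum_div]
  apply sum_congr rfl
  intro t _
  rw [mul_div_assoc]
  congr 1
  unfold bb
  have p1 : ∏ l, (μ t l : ℝ)^2 ≠ 0 := prod_ne_zero_iff.2 fun l _ => by
    have := hμ t l; positivity
  have p2 : (i.factorial : ℝ) ≠ 0 := by have := i.factorial_pos; positivity
  have : ∏ l, ((μ t l * i.factorial : ℕ):ℝ)^2
     = (∏ l, (μ t l : ℝ)^2) * ((i.factorial:ℝ)^2)^k := by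
    simp [mul_pow, prod_mul_distrib]
  rw [this]
  field_simp

lemma trap_bounds {m s x : ℕ} (hm : 0 < m) (hs : 0 < s) :
    0 ≤ wt ((m+1)*s) x - wt (m*s) x ∧ wt ((m+1)*s) x - wt (m*s) x ≤ 2 * s ∧
    (1 ≤ x → x < m * s → wt ((m+1)*s) x - wt (m*s) x = 2 * s) := by
  have e : (m+1)*s = m*s+s := by ring
  rw [e]
  generalize m * s = q
  unfold wt
  split_ifs with h0
  · have : (0:ℝ) ≤ s := by positivity
    subst h0
    refine ⟨by push_cast; linarith, by push_cast; linarith, by omega⟩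
  · have h1 : ((q - x : ℕ):ℝ) ≤ ((q + s - x : ℕ) : ℝ) := by exact_mod_cast (by omega)
    have h2 : ((q + s - x : ℕ):ℝ) ≤ ((q - x : ℕ) : ℝ) + s := by exact_mod_cast (by omega)
    refine ⟨by linarith, by linarith, fun _ hx => ?_⟩
    have h3 : ((q + s - x : ℕ):ℝ) = ((q - x : ℕ) : ℝ) + s := by exact_mod_cast (by omega)
    rw [h3]; ring

lemma VV_compare {k : ℕ} {c : (Fin k → ℕ) → ℝ} {D : ℝ} (hD : ∀ h, |c h| ≤ D)
    {m s : ℕ} (hm : 0 < m) (hs : 0 < s) :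
    |VV c m s / (2 * s)^k - ∑ h ∈ Fintype.piFinset (fun _ : Fin k => range (m*s)), c h|
      ≤ D * (((m+1)*s : ℝ)^k - ((m*s : ℝ) - 1)^k) := by
  set A := Fintype.piFinset (fun _ : Fin k => range ((m+1)*s)) with hA
  set B := Fintype.piFinset (fun _ : Fin k => range (m*s)) with hB
  set I := Fintype.piFinset (fun _ : Fin k => Ico 1 (m*s)) with hI
  have hle : m * s ≤ (m+1)*s := Nat.mul_le_mul_right _ (by omega)
  have hBA : B ⊆ A := Fintype.piFinset_subset _ _ fun l => range_mono hle
  have hIB : I ⊆ B := Fintype.piFinset_subset _ _ fun l => by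
    intro x hx; simp at hx ⊢; omega
  have hs' : (0:ℝ) < s := by exact_mod_cast hs
  have hD0 : 0 ≤ D := (abs_nonneg _).trans (hD 0)
  have hu : ∀ h : Fin k → ℕ, (∏ l, (wt ((m+1)*s) (h l) - wt (m*s) (h l))) / (2*s:ℝ)^k
      = ∏ l, ((wt ((m+1)*s) (h l) - wt (m*s) (h l)) / (2 * s)) := by
    intro h; rw [prod_div_distrib]; simp
  have e : VV c m s / (2 * s)^k - ∑ h ∈ B, c h = ∑ h ∈ A,
      ((∏ l, ((wt ((m+1)*s) (h l) - wt (m*s) (h l)) / (2 * s))) - if h ∈ B then 1 else 0) * c h := by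
    simp_rw [sub_mul, sum_sub_distrib]
    congr 1
    · unfold VV
      rw [sum_div]
      apply sum_congr rfl
      intro h _
      rw [← hu]; ring
    · simp only [ite_mul, one_mul, zero_mul]
      rw [← sum_filter, filter_mem_eq_inter, inter_eq_right.2 hBA]
  have hcard : ((#(A \ I) : ℕ) : ℝ) = ((m+1)*s : ℝ)^k - ((m*s : ℝ) - 1)^k := by
    rw [card_sdiff_of_subset (hIB.trans hBA), Nat.cast_sub (card_le_card (hIB.trans hBA))]
    have : 1 ≤ m * s := Nat.mul_pos hm hs
    simp [hA, hI, Nat.cast_sub this]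
  rw [e, ← hcard]
  have hz : ∀ h ∈ I, ((∏ l, ((wt ((m+1)*s) (h l) - wt (m*s) (h l)) / (2 * s)))
      - if h ∈ B then (1:ℝ) else 0) * c h = 0 := by
    intro h hh
    rw [if_pos (hIB hh), prod_eq_one, sub_self, zero_mul]
    intro l _
    have := Fintype.mem_piFinset.1 hh l
    rw [mem_Ico] at this
    rw [(trap_bounds hm hs).2.2 this.1 this.2]
    exact div_self (by positivity)
  rw [← sum_sdiff (hIB.trans hBA), sum_eq_zero hz, add_zero]
  refine (abs_sum_le_sum_abs _ _).trans ?_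
  rw [mul_comm D, ← nsmul_eq_mul]
  apply sum_le_card_nsmul
  intro h _
  rw [abs_mul]
  have q0 : 0 ≤ ∏ l, ((wt ((m+1)*s) (h l) - wt (m*s) (h l)) / (2 * s)) :=
    prod_nonneg fun l _ => div_nonneg (trap_bounds hm hs).1 (by positivity)
  have q1 : ∏ l, ((wt ((m+1)*s) (h l) - wt (m*s) (h l)) / (2 * s)) ≤ 1 :=
    prod_le_one (fun l _ => div_nonneg (trap_bounds hm hs).1 (by positivity))
      fun l _ => (div_le_one (by positivity)).2 (trap_bounds hm hs).2.1
  have q : |(∏ l, ((wt ((m+1)*s) (h l) - wt (m*s) (h l)) / (2 * s)))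
      - if h ∈ B then (1:ℝ) else 0| ≤ 1 := by
    rw [abs_le]; split_ifs <;> constructor <;> linarith
  calc _ ≤ 1 * D := mul_le_mul q (hD h) (abs_nonneg _) zero_le_one
    _ = D := one_mul D

theorem main_PD {k : ℕ} {c : (Fin k → ℕ) → ℝ} (hc : PD c) (l₀ : Fin k) {D : ℝ}
    (hD : ∀ h, |c h| ≤ D) (L : ℝ)
    (hL : Tendsto (fun H : ℕ =>
        ((H : ℝ) ^ k)⁻¹ * ∑ h ∈ Fintype.piFinset (fun _ : Fin k => Finset.range H), c h)
      atTop (nhds L)) : 0 ≤ L := by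
  obtain ⟨β, hβ0, hβ⟩ := bb_limit hc l₀
  have hfac : Tendsto (fun i : ℕ => i.factorial) atTop atTop :=
    tendsto_atTop_mono Nat.self_le_factorial tendsto_id
  have step : ∀ m : ℕ, 0 < m → -(D * ((1 + (m:ℝ)⁻¹)^k - 1)) ≤ L := by
    intro m hm
    have hm' : (0:ℝ) < m := by exact_mod_cast hm
    have t1 := (VV_limit hβ hm).div_const ((2 * (m:ℝ))^k)
    have t2 : Tendsto (fun i : ℕ => (((m * i.factorial : ℕ) : ℝ) ^ k)⁻¹ *
        ∑ h ∈ Fintype.piFinset (fun _ : Fin k => range (m * i.factorial)), c h) atTop (nhds L) :=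
      hL.comp (tendsto_atTop_mono (fun i => Nat.le_mul_of_pos_left _ hm) hfac)
    have t3 : Tendsto (fun i : ℕ => D * ((1 + (m:ℝ)⁻¹)^k
        - (1 - (m:ℝ)⁻¹ * ((i.factorial : ℕ) : ℝ)⁻¹)^k)) atTop
        (nhds (D * ((1 + (m:ℝ)⁻¹)^k - (1 - (m:ℝ)⁻¹ * 0)^k))) := by
      have := (tendsto_inv_atTop_nhds_zero_nat (𝕜 := ℝ)).comp hfac
      exact (((this.const_mul _).const_sub 1).pow k).const_sub _ |>.const_mul D
    simp only [mul_zero, sub_zero, one_pow] at t3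
    have h := le_of_tendsto_of_tendsto' (t1.sub t2) t3 (fun i => by
      have hs := i.factorial_pos
      have hs' : (0:ℝ) < i.factorial := by exact_mod_cast hs
      have := (abs_le.1 (VV_compare hD hm hs)).2
      have h2 := mul_le_mul_of_nonneg_left this
        (show (0:ℝ) ≤ ((m * i.factorial : ℝ)^k)⁻¹ by positivity)
      refine (le_of_eq ?_).trans (h2.trans (le_of_eq ?_))
      · rw [mul_sub]
        push_cast
        congr 1
        simp only [mul_pow, ← pow_mul]
        field_simp
        ring
      · rw [mul_left_comm]
        congr 1
        rw [mul_sub, ← inv_pow, ← mul_pow, ← mul_pow]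
        congr 2 <;> field_simp)
    have : 0 ≤ β * (2 * (m:ℝ) + 1)^k / (2 * (m:ℝ))^k := by positivity
    linarith
  have lim : Tendsto (fun m : ℕ => -(D * ((1 + (m:ℝ)⁻¹)^k - 1))) atTop
      (nhds (-(D * ((1 + 0)^k - 1)))) :=
    ((((tendsto_inv_atTop_nhds_zero_nat (𝕜 := ℝ)).const_add 1).pow k).sub_const 1
      |>.const_mul D).neg
  simp only [add_zero, one_pow, sub_self, mul_zero, neg_zero] at lim
  exact le_of_tendsto lim ((eventually_gt_atTop 0).mono step)

/-- If, for a bounded real sequence `a`, all the cube correlation limits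
`c_h = lim_N (1/N) ∑_{n<N} ∏_{ε ∈ {0,1}^k} a_{n+ε·h}` exist, and the averages
`(1/H^k) ∑_{h ∈ [0,H)^k} c_h` converge, then their limit is nonnegative. -/
theorem local_seminorm_nonneg (k : ℕ) (hk : 1 ≤ k) (a : ℕ → ℝ)
    (hbd : ∃ C : ℝ, ∀ n, |a n| ≤ C) (c : (Fin k → ℕ) → ℝ)
    (hc : ∀ h : Fin k → ℕ, Tendsto (fun N : ℕ =>
        (N : ℝ)⁻¹ * ∑ n ∈ Finset.range N,
          ∏ ε : Fin k → Bool, a (n + ∑ i, if ε i then h i else 0))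
      atTop (nhds (c h)))
    (L : ℝ)
    (hL : Tendsto (fun H : ℕ =>
        ((H : ℝ) ^ k)⁻¹ * ∑ h ∈ Fintype.piFinset (fun _ : Fin k => Finset.range H), c h)
      atTop (nhds L)) :
    0 ≤ L := by
  obtain ⟨C, hC⟩ := hbd
  have hprod : ∀ (T : Finset (Fin k → Bool)) (f : (Fin k → Bool) → ℕ),
      |∏ ε ∈ T, a (f ε)| ≤ C ^ (#T) := by
    intro T f
    rw [abs_prod, ← prod_const]
    exact prod_le_prod (fun _ _ => abs_nonneg _) fun _ _ => hC _
  have hC0 : 0 ≤ C := (abs_nonneg _).trans (hC 0)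
  have hD : ∀ h, |c h| ≤ C ^ (#(univ : Finset (Fin k → Bool))) := by
    intro h
    refine le_of_tendsto' (hc h).abs fun N => ?_
    rw [abs_mul, abs_of_nonneg (by positivity : (0:ℝ) ≤ (N:ℝ)⁻¹)]
    have h1 : |∑ n ∈ range N, ∏ ε : Fin k → Bool, a (n + ∑ i, if ε i then h i else 0)|
        ≤ N * C ^ (#(univ : Finset (Fin k → Bool))) := by
      refine (abs_sum_le_sum_abs _ _).trans ?_
      have := sum_le_card_nsmul (range N)
        (fun n => |∏ ε : Fin k → Bool, a (n + ∑ i, if ε i then h i else 0)|) _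
        (fun n _ => hprod univ _)
      simpa only [card_range, nsmul_eq_mul] using this
    rcases Nat.eq_zero_or_pos N with rfl | hN
    · simp only [Nat.cast_zero, inv_zero, zero_mul]; positivity
    · have hN' : (0:ℝ) < N := by exact_mod_cast hN
      rw [inv_mul_le_iff₀ hN']
      exact h1
  have hcorr : ∀ (l : Fin k) (h : Fin k → ℕ) (x : ℕ), Tendsto (avg fun n =>
      (fun n => ∏ ε ∈ univ.filter (fun ε : Fin k → Bool => ε l = false),
        a (n + ∑ i, if ε i then h i else 0)) n *
      (fun n => ∏ ε ∈ univ.filter (fun ε : Fin k → Bool => ε l = false),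
        a (n + ∑ i, if ε i then h i else 0)) (n + x)) atTop
      (nhds ((fun x => c (Function.update h l x)) x)) := by
    intro l h x
    refine (hc (Function.update h l x)).congr fun N => ?_
    unfold avg
    simp only [cube_split]
  have pd : PD c := ⟨fun l h s => Q_nonneg (fun n => hprod _ _) (hcorr l h) s,
    fun l h m s => Q_mul (fun n => hprod _ _) (hcorr l h) m s⟩
  exact main_PD pd ⟨0, hk⟩ hD L hL
end
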